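/- arXiv:1308.3072 — 3 statements merged into one kernel-verified Lean document; each statement's English description precedes it below -/
import Mathlib

section
/- Let D > 0 and set N := ⌊2D·max{κ_s, κ_p}·e²⌋. Then for all x, y ∈ ℝ³ with 0 < |x−y| ≤ D, the operator norm of the Kupradze matrix satisfies ‖Γ^ω(x,y)‖ ≤ (1/(4π))·[ C₇/|x−y| + C₈ ], where C₇ := 1/c_s² + 2/c_p² and C₈ := 2(κ_s/c_s²)·( Σ_{l=0}^{N−1} (κ_s D/2)^l + 2^{1−N} ) + (κ_p/c_p²)·( Σ_{l=0}^{N−1} (κ_p D/2)^l + 2^{1−N} ). -/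
noncomputable section
open Real

abbrev E3 := EuclideanSpace ℝ (Fin 3)

/-- Free-space fundamental solution of the Helmholtz equation. -/
def Phi (κ : ℝ) (x y : E3) : ℂ :=
  Complex.exp (Complex.I * κ * ‖x - y‖) / (4 * Real.pi * ‖x - y‖)

/-- Phase velocity `c_s = √μ`. -/
def cS (mu : ℝ) : ℝ := Real.sqrt mu

/-- Phase velocity `c_p = √(λ+2μ)`. -/
def cP (lam mu : ℝ) : ℝ := Real.sqrt (lam + 2 * mu)

/-- Transversal wavenumber `κ_s = ω/c_s`. -/
def kappaS (mu om : ℝ) : ℝ := om / cS mu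

/-- Longitudinal wavenumber `κ_p = ω/c_p`. -/
def kappaP (lam mu om : ℝ) : ℝ := om / cP lam mu

/-- The Kupradze matrix of the fundamental solution of the Navier equation. -/
def Gamma (lam mu om : ℝ) (x y : E3) (i j : Fin 3) : ℂ :=
  (1 / (mu : ℂ)) * Phi (kappaS mu om) x y * (if i = j then 1 else 0)
  + (1 / (om : ℂ) ^ 2) *
      fderiv ℝ
        (fun x' : E3 =>
          fderiv ℝ
            (fun x'' : E3 => Phi (kappaS mu om) x'' y - Phi (kappaP lam mu om) x'' y)
            x' (EuclideanSpace.single j 1))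
        x (EuclideanSpace.single i 1)

/-- The `3×3` Kupradze matrix `Γ^ω(x,y)`. -/
def GammaMat (lam mu om : ℝ) (x y : E3) : Matrix (Fin 3) (Fin 3) ℂ :=
  Matrix.of fun i j => Gamma lam mu om x y i j

/-- Operator norm of a `3×3` complex matrix with respect to Euclidean norms. -/
def opNorm3 (A : Matrix (Fin 3) (Fin 3) ℂ) : ℝ :=
  ‖LinearMap.toContinuousLinearMap (Matrix.toEuclideanLin A)‖

/-- `N := ⌊2D·max{κ_s,κ_p}·e²⌋`. -/
def NOm (lam mu om D : ℝ) : ℕ :=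
  Nat.floor (2 * D * max (kappaS mu om) (kappaP lam mu om) * Real.exp 1 ^ 2)


def gg (t : ℝ) : ℂ := (Complex.I * t - 1) * Complex.exp (Complex.I * t)

lemma gg_deriv (t : ℝ) : HasDerivAt gg (-(t : ℂ) * Complex.exp (Complex.I * t)) t := by
  have h1 : HasDerivAt (fun s : ℝ => Complex.I * (s : ℂ)) Complex.I t := by
    simpa using (Complex.ofRealCLM.hasDerivAt (x := t)).const_mul Complex.I
  have h2 := (h1.sub_const 1).mul h1.cexp
  refine h2.congr_deriv ?_
  linear_combination (t * Complex.exp (Complex.I * t)) * Complex.I_sq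

lemma norm_e (t : ℝ) : ‖Complex.exp (Complex.I * t)‖ = 1 := by
  rw [mul_comm]; exact Complex.norm_exp_ofReal_mul_I t

lemma norm_e_sub (t : ℝ) (ht : 0 ≤ t) : ‖Complex.exp (Complex.I * t) - 1‖ ≤ t := by
  have := Real.norm_exp_I_mul_ofReal_sub_one_le (x := t)
  simpa [abs_of_nonneg ht] using this

lemma gg_sub (a b : ℝ) (hb : 0 ≤ b) (hab : b ≤ a) : ‖gg a - gg b‖ ≤ (a ^ 2 - b ^ 2) / 2 := by
  have h := image_norm_le_of_norm_deriv_right_le_deriv_boundary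
    (f := fun t => gg t - gg b) (f' := fun t => -(t : ℂ) * Complex.exp (Complex.I * t))
    (a := b) (b := a) (B := fun t => (t ^ 2 - b ^ 2) / 2) (B' := fun t => t)
    (fun t _ => ((gg_deriv t).sub_const _).continuousAt.continuousWithinAt)
    (fun t _ => ((gg_deriv t).sub_const _).hasDerivWithinAt)
    (by simp)
    (fun t => by
      have := (((hasDerivAt_pow 2 t).sub_const (b ^ 2)).div_const 2)
      refine this.congr_deriv ?_
      simp)
    (fun t ht => by
      rw [norm_mul, norm_e, norm_neg, Complex.norm_real, Real.norm_of_nonneg (hb.trans ht.1)]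
      simp)
  exact h (Set.right_mem_Icc.2 hab)

lemma gg_cubic (a : ℝ) (ha : 0 ≤ a) : ‖gg a + 1 + (a : ℂ) ^ 2 / 2‖ ≤ a ^ 3 / 3 := by
  have hd : ∀ t : ℝ, HasDerivAt (fun t : ℝ => gg t + 1 + (t : ℂ) ^ 2 / 2)
      (-(t : ℂ) * Complex.exp (Complex.I * t) + t) t := by
    intro t
    have h1 : HasDerivAt (fun s : ℝ => (s : ℂ)) 1 t := by
      simpa using (hasDerivAt_id t).ofReal_comp
    refine (((gg_deriv t).add_const 1).add ((h1.pow 2).div_const 2)).congr_deriv ?_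
    simp
  have h := image_norm_le_of_norm_deriv_right_le_deriv_boundary
    (f := fun t : ℝ => gg t + 1 + (t : ℂ) ^ 2 / 2)
    (f' := fun t => -(t : ℂ) * Complex.exp (Complex.I * t) + t)
    (a := 0) (b := a) (B := fun t => t ^ 3 / 3) (B' := fun t => t ^ 2)
    (fun t _ => (hd t).continuousAt.continuousWithinAt)
    (fun t _ => (hd t).hasDerivWithinAt)
    (by simp [gg])
    (fun t => by
      refine ((hasDerivAt_pow 3 t).div_const 3).congr_deriv ?_
      simp)
    (fun t ht => by
      have : -(t : ℂ) * Complex.exp (Complex.I * t) + t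
          = -(t : ℂ) * (Complex.exp (Complex.I * t) - 1) := by ring
      rw [this, norm_mul, norm_neg, Complex.norm_real, Real.norm_of_nonneg ht.1, pow_two]
      exact mul_le_mul_of_nonneg_left (norm_e_sub t ht.1) ht.1)
  exact h (Set.right_mem_Icc.2 ha)

lemma norm_fderiv (x y : E3) (hxy : x ≠ y) :
    HasFDerivAt (fun z : E3 => ‖z - y‖) (‖x - y‖⁻¹ • innerSL ℝ (x - y)) x := by
  have hne : x - y ≠ 0 := sub_ne_zero.2 hxy
  have h0 : 0 < ‖x - y‖ := norm_pos_iff.2 hne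
  have h1 : HasFDerivAt (fun z : E3 => ‖z - y‖ ^ 2) (2 • innerSL ℝ (x - y)) x := by
    have := ((hasStrictFDerivAt_norm_sq (x - y)).hasFDerivAt).comp x
      ((hasFDerivAt_id x).sub_const y)
    refine HasFDerivAt.congr_fderiv this ?_
    ext v
    simp
  have h2 := h1.sqrt (by positivity)
  have h3 : (fun z : E3 => √(‖z - y‖ ^ 2)) = fun z => ‖z - y‖ := by
    funext z; exact Real.sqrt_sq (norm_nonneg _)
  rw [h3] at h2
  refine h2.congr_fderiv ?_
  rw [Real.sqrt_sq h0.le]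
  ext v
  simp
  field_simp

lemma radial (φ : ℝ → ℂ) (d : ℂ) (x y : E3) (hxy : x ≠ y) (h : HasDerivAt φ d ‖x - y‖) :
    HasFDerivAt (fun z : E3 => φ ‖z - y‖)
      ((‖x - y‖⁻¹ • innerSL ℝ (x - y)).smulRight d) x := by
  have := h.hasFDerivAt.comp x (norm_fderiv x y hxy)
  refine this.congr_fderiv ?_
  ext v
  simp
  ring

lemma hess (φ ψ ψ' : ℝ → ℂ) (h1 : ∀ ρ : ℝ, 0 < ρ → HasDerivAt φ (ρ * ψ ρ) ρ)
    (h2 : ∀ ρ : ℝ, 0 < ρ → HasDerivAt ψ (ψ' ρ) ρ) (x y : E3) (hxy : x ≠ y) (i j : Fin 3) :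
    fderiv ℝ (fun x' : E3 => fderiv ℝ (fun z : E3 => φ ‖z - y‖) x' (EuclideanSpace.single j 1))
      x (EuclideanSpace.single i 1)
    = ψ ‖x - y‖ * (if i = j then 1 else 0)
      + ψ' ‖x - y‖ / ‖x - y‖ * ((x - y) i : ℝ) * ((x - y) j : ℝ) := by
  have hpos : ∀ z : E3, z ≠ y → 0 < ‖z - y‖ := fun z hz => norm_pos_iff.2 (sub_ne_zero.2 hz)
  have hev : (fun x' : E3 => fderiv ℝ (fun z : E3 => φ ‖z - y‖) x' (EuclideanSpace.single j 1))
      =ᶠ[nhds x] fun x' => ((x' j - y j : ℝ) : ℂ) * ψ ‖x' - y‖ := by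
    filter_upwards [isOpen_ne.mem_nhds hxy] with z hz
    have hz' := hpos z hz
    rw [(radial φ _ z y hz (h1 _ hz')).fderiv]
    have : (‖z - y‖ : ℂ) ≠ 0 := by exact_mod_cast hz'.ne'
    simp [EuclideanSpace.inner_single_right]
    field_simp
  rw [hev.fderiv_eq]
  have hj : HasFDerivAt (fun x' : E3 => ((x' j - y j : ℝ) : ℂ))
      (Complex.ofRealCLM.comp (EuclideanSpace.proj (𝕜 := ℝ) j)) x :=
    Complex.ofRealCLM.hasFDerivAt.comp x
      (((EuclideanSpace.proj (𝕜 := ℝ) j).hasFDerivAt (x := x)).sub_const (y j))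
  have hm := hj.mul (radial ψ _ x y hxy (h2 _ (hpos x hxy)))
  have hm' : fderiv ℝ (fun x' : E3 => ((x' j - y j : ℝ) : ℂ) * ψ ‖x' - y‖) x = _ := hm.fderiv
  rw [hm']
  have : (‖x - y‖ : ℂ) ≠ 0 := by exact_mod_cast (hpos x hxy).ne'
  by_cases hij : i = j
  · subst hij
    simp [EuclideanSpace.inner_single_right]
    field_simp
    ring
  · simp [EuclideanSpace.inner_single_right, hij, Ne.symm hij]
    field_simp

lemma opnorm_rank1 (α β : ℂ) (u : Fin 3 → ℝ) (hu : ∑ i, u i ^ 2 = 1) (K : ℝ)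
    (ha : ‖α‖ ≤ K) (hb : ‖β‖ ≤ K) :
    opNorm3 (Matrix.of fun i j => α * (if i = j then 1 else 0) + (β - α) * u i * u j) ≤ K := by
  have hK : 0 ≤ K := (norm_nonneg _).trans ha
  refine ContinuousLinearMap.opNorm_le_bound _ hK fun v => ?_
  set U : EuclideanSpace ℂ (Fin 3) := WithLp.toLp 2 (fun i => (u i : ℂ)) with hU
  set c : ℂ := inner ℂ U v with hc
  have hUU : inner ℂ U U = (1 : ℂ) := by
    simp only [hU, PiLp.inner_apply]
    have : ((∑ i, u i ^ 2 : ℝ) : ℂ) = 1 := by rw [hu]; simp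
    rw [← this]
    push_cast
    refine Finset.sum_congr rfl fun i _ => ?_
    simp only [RCLike.inner_apply, Complex.conj_ofReal, pow_two]
  have hort : inner ℂ (v - c • U) U = (0 : ℂ) := by
    rw [inner_sub_left, inner_smul_left, hUU, hc, inner_conj_symm]
    simp
  have hM : (LinearMap.toContinuousLinearMap (Matrix.toEuclideanLin
      (Matrix.of fun i j => α * (if i = j then 1 else 0) + (β - α) * u i * u j))) v
      = α • (v - c • U) + (β * c) • U := by
    ext i
    have hc' : c = ∑ j, (u j : ℂ) * v j := by
      simp only [hc, hU, PiLp.inner_apply]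
      refine Finset.sum_congr rfl fun i _ => ?_
      simp [mul_comm]
    simp only [hc', Fin.sum_univ_three, hU]
    fin_cases i <;>
      simp [Matrix.toEuclideanLin, Matrix.mulVec, dotProduct, Fin.sum_univ_three] <;> ring
  have hv : v = (v - c • U) + c • U := by simp
  have hnU : ‖U‖ = 1 := by
    have := inner_self_eq_norm_sq_to_K (𝕜 := ℂ) U
    rw [hUU] at this
    have h2 : ‖U‖ ^ 2 = 1 := by
      have h3 : ((‖U‖ ^ 2 : ℝ) : ℂ) = ((1 : ℝ) : ℂ) := by push_cast; exact this.symm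
      exact Complex.ofReal_injective h3
    nlinarith [norm_nonneg U]
  have p1 : ‖v‖ * ‖v‖ = ‖v - c • U‖ * ‖v - c • U‖ + ‖c • U‖ * ‖c • U‖ := by
    conv_lhs => rw [hv]
    exact norm_add_sq_eq_norm_sq_add_norm_sq_of_inner_eq_zero _ _
      (by rw [inner_smul_right, hort, mul_zero])
  have p2 : ‖α • (v - c • U) + (β * c) • U‖ * ‖α • (v - c • U) + (β * c) • U‖
      = ‖α • (v - c • U)‖ * ‖α • (v - c • U)‖ + ‖(β * c) • U‖ * ‖(β * c) • U‖ :=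
    norm_add_sq_eq_norm_sq_add_norm_sq_of_inner_eq_zero _ _
      (by rw [inner_smul_right, inner_smul_left, hort, mul_zero, mul_zero])
  rw [hM]
  refine abs_le_of_sq_le_sq' ?_ (by positivity) |>.2
  rw [pow_two, p2, mul_pow, pow_two ‖v‖, p1]
  simp only [norm_smul, norm_mul, hnU, mul_one]
  have e1 : ‖α‖ ^ 2 ≤ K ^ 2 := pow_le_pow_left₀ (norm_nonneg _) ha 2
  have e2 : ‖β‖ ^ 2 ≤ K ^ 2 := pow_le_pow_left₀ (norm_nonneg _) hb 2
  have f1 := mul_le_mul_of_nonneg_right e1 (sq_nonneg ‖v - c • U‖)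
  have f2 := mul_le_mul_of_nonneg_right e2 (sq_nonneg ‖c‖)
  nlinarith

def psi (κ ρ : ℝ) : ℂ := gg (κ * ρ) / (4 * Real.pi * (ρ : ℂ) ^ 3)
def psi' (κ ρ : ℝ) : ℂ :=
  (-(κ : ℂ) ^ 2 * ρ ^ 2 * Complex.exp (Complex.I * κ * ρ) - 3 * gg (κ * ρ))
    / (4 * Real.pi * (ρ : ℂ) ^ 4)

lemma phi_deriv (κ ρ : ℝ) (hρ : 0 < ρ) :
    HasDerivAt (fun r : ℝ => Complex.exp (Complex.I * κ * r) / (4 * Real.pi * r))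
      (ρ * psi κ ρ) ρ := by
  have h0 : HasDerivAt (fun s : ℝ => (s : ℂ)) 1 ρ := by
    simpa using (hasDerivAt_id ρ).ofReal_comp
  have hc : (ρ : ℂ) ≠ 0 := by exact_mod_cast hρ.ne'
  have hp : (Real.pi : ℂ) ≠ 0 := by exact_mod_cast Real.pi_ne_zero
  refine ((h0.const_mul (Complex.I * κ)).cexp.div (h0.const_mul (4 * (Real.pi : ℂ)))
    (by simp [hc])).congr_deriv ?_
  simp only [psi, gg]
  push_cast
  rw [← mul_assoc Complex.I]
  field_simp

lemma psi_deriv (κ ρ : ℝ) (hρ : 0 < ρ) : HasDerivAt (psi κ) (psi' κ ρ) ρ := by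
  have h0 : HasDerivAt (fun s : ℝ => (s : ℂ)) 1 ρ := by
    simpa using (hasDerivAt_id ρ).ofReal_comp
  have hc : (ρ : ℂ) ≠ 0 := by exact_mod_cast hρ.ne'
  have hp : (Real.pi : ℂ) ≠ 0 := by exact_mod_cast Real.pi_ne_zero
  have h1 : HasDerivAt (fun s : ℝ => gg (κ * s)) _ ρ :=
    (gg_deriv (κ * ρ)).scomp ρ ((hasDerivAt_id ρ).const_mul κ)
  refine (h1.div ((h0.pow 3).const_mul (4 * (Real.pi : ℂ))) (by simp [hc])).congr_deriv ?_
  simp only [psi']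
  push_cast
  rw [← mul_assoc Complex.I]
  simp
  field_simp

/-- The estimate (modgamma): for `0 < |x−y| ≤ D`,
`‖Γ^ω(x,y)‖ ≤ (1/(4π))(C₇/|x−y| + C₈)` with
`C₇ = 1/c_s² + 2/c_p²` and
`C₈ = 2(κ_s/c_s²)(Σ_{l<N}(κ_s D/2)^l + 2^{1−N}) + (κ_p/c_p²)(Σ_{l<N}(κ_p D/2)^l + 2^{1−N})`. -/
theorem gamma_opNorm_bound (lam mu om D : ℝ) (hmu : 0 < mu)
    (hlm : 0 < 3 * lam + 2 * mu) (hom : 0 < om) (hD : 0 < D)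
    (x y : E3) (hxy : x ≠ y) (hle : ‖x - y‖ ≤ D) :
    opNorm3 (GammaMat lam mu om x y)
      ≤ (1 / (4 * Real.pi)) *
        ((1 / cS mu ^ 2 + 2 / cP lam mu ^ 2) / ‖x - y‖
          + (2 * (kappaS mu om / cS mu ^ 2) *
              ((∑ l ∈ Finset.range (NOm lam mu om D), (kappaS mu om * D / 2) ^ l)
                + (2 : ℝ) ^ ((1 : ℤ) - (NOm lam mu om D : ℤ)))
            + (kappaP lam mu om / cP lam mu ^ 2) *
              ((∑ l ∈ Finset.range (NOm lam mu om D), (kappaP lam mu om * D / 2) ^ l)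
                + (2 : ℝ) ^ ((1 : ℤ) - (NOm lam mu om D : ℤ))))) := by
  have hL : mu < lam + 2 * mu := by linarith
  have hL0 : 0 < lam + 2 * mu := by linarith
  have hcS : cS mu ^ 2 = mu := Real.sq_sqrt hmu.le
  have hcP : cP lam mu ^ 2 = lam + 2 * mu := Real.sq_sqrt hL0.le
  have hcS0 : 0 < cS mu := Real.sqrt_pos.2 hmu
  have hcP0 : 0 < cP lam mu := Real.sqrt_pos.2 hL0
  have hs0 : 0 < kappaS mu om := div_pos hom hcS0
  have hp0 : 0 < kappaP lam mu om := div_pos hom hcP0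
  have hs2 : kappaS mu om ^ 2 = om ^ 2 / mu := by rw [kappaS, div_pow, hcS]
  have hp2 : kappaP lam mu om ^ 2 = om ^ 2 / (lam + 2 * mu) := by rw [kappaP, div_pow, hcP]
  have hps : kappaP lam mu om ≤ kappaS mu om :=
    div_le_div_of_nonneg_left hom.le hcS0 (Real.sqrt_le_sqrt hL.le)
  have hS : ∀ q : ℝ, 0 ≤ q → ∀ N : ℕ, 1 ≤ (∑ l ∈ Finset.range N, q ^ l)
      + (2 : ℝ) ^ ((1 : ℤ) - (N : ℤ)) := by
    intro q hq N
    rcases N with _ | N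
    · norm_num
    · rw [Finset.sum_range_succ']
      have : 0 ≤ ∑ k ∈ Finset.range N, q ^ (k + 1) := Finset.sum_nonneg fun _ _ => by positivity
      have h2 : (0 : ℝ) < (2 : ℝ) ^ ((1 : ℤ) - ((N + 1 : ℕ) : ℤ)) := by positivity
      simp only [pow_zero]
      linarith
  have hSs := hS (kappaS mu om * D / 2) (by positivity) (NOm lam mu om D)
  have hSp := hS (kappaP lam mu om * D / 2) (by positivity) (NOm lam mu om D)
  rw [hcS, hcP]
  generalize (∑ l ∈ Finset.range (NOm lam mu om D), (kappaS mu om * D / 2) ^ l)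
      + (2 : ℝ) ^ ((1 : ℤ) - (NOm lam mu om D : ℤ)) = S1 at hSs ⊢
  generalize (∑ l ∈ Finset.range (NOm lam mu om D), (kappaP lam mu om * D / 2) ^ l)
      + (2 : ℝ) ^ ((1 : ℤ) - (NOm lam mu om D : ℤ)) = S2 at hSp ⊢
  have hr : 0 < ‖x - y‖ := norm_pos_iff.2 (sub_ne_zero.2 hxy)
  have hG := fun i j => hess
    (fun ρ => Complex.exp (Complex.I * (kappaS mu om) * ρ) / (4 * Real.pi * ρ)
      - Complex.exp (Complex.I * (kappaP lam mu om) * ρ) / (4 * Real.pi * ρ))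
    (fun ρ => psi (kappaS mu om) ρ - psi (kappaP lam mu om) ρ)
    (fun ρ => psi' (kappaS mu om) ρ - psi' (kappaP lam mu om) ρ)
    (fun ρ hρ => ((phi_deriv _ ρ hρ).sub (phi_deriv _ ρ hρ)).congr_deriv (by ring))
    (fun ρ hρ => (psi_deriv _ ρ hρ).sub (psi_deriv _ ρ hρ)) x y hxy i j
  have hu : ∑ i, ((x - y) i / ‖x - y‖) ^ 2 = 1 := by
    have := EuclideanSpace.real_norm_sq_eq (x - y)
    simp only [div_pow]
    rw [← Finset.sum_div, ← this]
    exact div_self (by positivity)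
  have hMat : GammaMat lam mu om x y = Matrix.of fun i j =>
      (1 / (mu : ℂ) * Phi (kappaS mu om) x y + 1 / (om : ℂ) ^ 2 *
        (psi (kappaS mu om) ‖x - y‖ - psi (kappaP lam mu om) ‖x - y‖)) * (if i = j then 1 else 0)
      + ((1 / (mu : ℂ) * Phi (kappaS mu om) x y + 1 / (om : ℂ) ^ 2 *
        (psi (kappaS mu om) ‖x - y‖ - psi (kappaP lam mu om) ‖x - y‖)
        + 1 / (om : ℂ) ^ 2 *
        (psi' (kappaS mu om) ‖x - y‖ - psi' (kappaP lam mu om) ‖x - y‖) * ‖x - y‖)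
       - (1 / (mu : ℂ) * Phi (kappaS mu om) x y + 1 / (om : ℂ) ^ 2 *
        (psi (kappaS mu om) ‖x - y‖ - psi (kappaP lam mu om) ‖x - y‖)))
       * (((x - y) i / ‖x - y‖ : ℝ) : ℂ) * (((x - y) j / ‖x - y‖ : ℝ) : ℂ) := by
    ext i j
    have hrc : (‖x - y‖ : ℂ) ≠ 0 := by exact_mod_cast hr.ne'
    simp only [GammaMat, Matrix.of_apply, _root_.Gamma]
    have := hG i j
    simp only [Phi]
    rw [this]
    push_cast
    field_simp
    ring
  rw [hMat]
  set r := ‖x - y‖ with hrdef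
  have hPhi : Phi (kappaS mu om) x y
      = Complex.exp (Complex.I * ((kappaS mu om * r : ℝ) : ℂ)) / (4 * Real.pi * r) := by
    simp only [Phi, hrdef]
    push_cast
    rw [← mul_assoc Complex.I]
  rw [hPhi]
  have hpp : psi' (kappaP lam mu om) r = (-(kappaP lam mu om : ℂ) ^ 2 * r ^ 2 *
     Complex.exp (Complex.I * ((kappaP lam mu om * r : ℝ) : ℂ)) - 3 * gg (kappaP lam mu om * r))
    / (4 * Real.pi * (r : ℂ) ^ 4) := by
    simp only [psi']
    push_cast
    rw [← mul_assoc Complex.I]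
  have hps' : psi' (kappaS mu om) r = (-(kappaS mu om : ℂ) ^ 2 * r ^ 2 *
     Complex.exp (Complex.I * ((kappaS mu om * r : ℝ) : ℂ)) - 3 * gg (kappaS mu om * r))
    / (4 * Real.pi * (r : ℂ) ^ 4) := by
    simp only [psi']
    push_cast
    rw [← mul_assoc Complex.I]
  rw [hpp, hps']
  simp only [psi]
  have hs2c : (kappaS mu om : ℂ) ^ 2 = (om : ℂ) ^ 2 / mu := by exact_mod_cast hs2
  have hp2c : (kappaP lam mu om : ℂ) ^ 2 = (om : ℂ) ^ 2 / ((lam + 2 * mu : ℝ) : ℂ) := by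
    exact_mod_cast hp2
  rw [hs2c, hp2c]
  set L := lam + 2 * mu
  generalize kappaS mu om = s at *
  generalize kappaP lam mu om = p at *
  have n1 := norm_e (s * r)
  have n2 := norm_e (p * r)
  have n3 := norm_e_sub (s * r) (by positivity)
  have g1 := gg_sub (s * r) (p * r) (by positivity) (by gcongr)
  have g2 := gg_sub (p * r) 0 le_rfl (by positivity)
  have g3 := gg_cubic (s * r) (by positivity)
  have hgg0 : gg 0 = -1 := by simp [gg]
  rw [hgg0] at g2
  generalize Complex.exp (Complex.I * ((s * r : ℝ) : ℂ)) = Es at *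
  generalize Complex.exp (Complex.I * ((p * r : ℝ) : ℂ)) = Ep at *
  generalize gg (s * r) = Ga at *
  generalize gg (p * r) = Gb at *
  have hrc : (r : ℂ) ≠ 0 := by exact_mod_cast hr.ne'
  have hmc : (mu : ℂ) ≠ 0 := by exact_mod_cast hmu.ne'
  have hoc : (om : ℂ) ≠ 0 := by exact_mod_cast hom.ne'
  have hLc : (L : ℂ) ≠ 0 := by exact_mod_cast hL0.ne'
  have hpi : (Real.pi : ℂ) ≠ 0 := by exact_mod_cast Real.pi_ne_zero
  have hpi0 := Real.pi_pos
  have hn : ∀ (z : ℂ) (K : ℝ), ‖z‖ ≤ K * r →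
      ‖((1 / (4 * Real.pi * r) : ℝ) : ℂ) * z‖ ≤ 1 / (4 * Real.pi) * K := by
    intro z K hz
    rw [norm_mul, Complex.norm_real, Real.norm_of_nonneg (by positivity)]
    calc 1 / (4 * Real.pi * r) * ‖z‖ ≤ 1 / (4 * Real.pi * r) * (K * r) := by gcongr
      _ = _ := by field_simp
  have hK : ((1 / mu + 2 / L) / r + (2 * (s / mu) * S1 + p / L * S2)) * r
      = 1 / mu + 2 / L + (2 * (s / mu) * S1 + p / L * S2) * r := by field_simp
  have hK1 : 2 * (s / mu) * r ≤ (2 * (s / mu) * S1 + p / L * S2) * r := by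
    have h1 : 2 * (s / mu) * 1 ≤ 2 * (s / mu) * S1 := by gcongr
    have h2 : 0 ≤ p / L * S2 := by positivity
    gcongr
    linarith
  have hmul : ∀ (c : ℝ) (z : ℂ), 0 ≤ c → ‖(c : ℂ) * z‖ = c * ‖z‖ := by
    intro c z hc
    rw [norm_mul, Complex.norm_real, Real.norm_of_nonneg hc]
  refine opnorm_rank1 _ _ _ hu _ ?_ ?_
  · have : 1 / (mu : ℂ) * (Es / (4 * Real.pi * r)) + 1 / (om : ℂ) ^ 2 *
        (Ga / (4 * Real.pi * (r : ℂ) ^ 3) - Gb / (4 * Real.pi * (r : ℂ) ^ 3))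
        = ((1 / (4 * Real.pi * r) : ℝ) : ℂ) * (((1 / mu : ℝ) : ℂ) * (Es - 1)
          + ((1 / (2 * mu) : ℝ) : ℂ) + ((1 / (om * r) ^ 2 : ℝ) : ℂ) *
            (Ga + 1 + ((s * r : ℝ) : ℂ) ^ 2 / 2)
            - ((1 / (om * r) ^ 2 : ℝ) : ℂ) * (Gb - -1)) := by
      push_cast
      rw [mul_pow (s : ℂ), hs2c]
      field_simp
      ring
    rw [this]
    apply hn
    rw [hK]
    refine (norm_sub_le _ _).trans ?_
    refine (add_le_add_left (norm_add_le _ _) _).trans ?_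
    refine (add_le_add_left (add_le_add_left (norm_add_le _ _) _) _).trans ?_
    rw [hmul _ _ (by positivity), hmul _ _ (by positivity), hmul _ _ (by positivity),
      Complex.norm_real, Real.norm_of_nonneg (by positivity)]
    have e1 : 1 / mu * ‖Es - 1‖ ≤ 1 / mu * (s * r) := by gcongr
    have e2 : 1 / (om * r) ^ 2 * ‖Ga + 1 + ((s * r : ℝ) : ℂ) ^ 2 / 2‖
        ≤ 1 / (om * r) ^ 2 * ((s * r) ^ 3 / 3) := by gcongr
    have e3 : 1 / (om * r) ^ 2 * ‖Gb - -1‖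
        ≤ 1 / (om * r) ^ 2 * (((p * r) ^ 2 - 0 ^ 2) / 2) := by gcongr
    have e2' : 1 / (om * r) ^ 2 * ((s * r) ^ 3 / 3) = (1 / mu * (s * r)) / 3 := by
      have : (s * r) ^ 3 = s ^ 2 * s * r ^ 3 := by ring
      rw [this, hs2]; field_simp
    have e3' : 1 / (om * r) ^ 2 * (((p * r) ^ 2 - 0 ^ 2) / 2) = (1 / L) / 2 := by
      rw [mul_pow p, hp2]; field_simp; ring
    have e4 : 1 / (2 * mu) = (1 / mu) / 2 := by field_simp
    have e5 : 2 * (s / mu) * r = 2 * (1 / mu * (s * r)) := by ring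
    have e6 : 2 / L = 2 * (1 / L) := by ring
    have e7 : 0 < 1 / L := by positivity
    have e8 : 0 < 1 / mu := by positivity
    have e9 : 0 < 1 / mu * (s * r) := by positivity
    linarith
  · have : 1 / (mu : ℂ) * (Es / (4 * Real.pi * r)) + 1 / (om : ℂ) ^ 2 *
        (Ga / (4 * Real.pi * (r : ℂ) ^ 3) - Gb / (4 * Real.pi * (r : ℂ) ^ 3))
        + 1 / (om : ℂ) ^ 2 * ((-((om : ℂ) ^ 2 / mu) * r ^ 2 * Es - 3 * Ga)
          / (4 * Real.pi * (r : ℂ) ^ 4) - (-((om : ℂ) ^ 2 / L) * r ^ 2 * Ep - 3 * Gb)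
          / (4 * Real.pi * (r : ℂ) ^ 4)) * r
        = ((1 / (4 * Real.pi * r) : ℝ) : ℂ) * (((1 / L : ℝ) : ℂ) * Ep
            - ((2 / (om * r) ^ 2 : ℝ) : ℂ) * (Ga - Gb)) := by
      push_cast
      field_simp
      ring
    rw [this]
    apply hn
    rw [hK]
    refine (norm_sub_le _ _).trans ?_
    rw [hmul _ _ (by positivity), hmul _ _ (by positivity), n2]
    have e1 : 2 / (om * r) ^ 2 * ‖Ga - Gb‖
        ≤ 2 / (om * r) ^ 2 * (((s * r) ^ 2 - (p * r) ^ 2) / 2) := by gcongr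
    have e2 : 2 / (om * r) ^ 2 * (((s * r) ^ 2 - (p * r) ^ 2) / 2) = 1 / mu - 1 / L := by
      rw [mul_pow s, mul_pow p, hs2, hp2]; field_simp
    have e6 : 2 / L = 2 * (1 / L) := by ring
    have e7 : 0 < 1 / L := by positivity
    have e9 : 0 < 2 * (s / mu) * r := by positivity
    linarith

end
end

section
/- Let D > 0 and set N := ⌊2D·max{κ_s, κ_p}·e²⌋. Then for all x, y ∈ ℝ³ with 0 < |x−y| ≤ D and every unit vector e ∈ ℝ³, the directional derivative of the Kupradze matrix in its first variable satisfies ‖D_x Γ^ω(x,y)[e]‖ ≤ (1/(4π))·[ C₉/|x−y|² + C₁₀ ], where C₉ := 3(1/c_s² + 1/c_p²) and C₁₀ := 2(ω²/c_s⁴)·( 1/8 + Σ_{l=0}^{N−1} (κ_s D/2)^l + 2^{1−N} ) + (ω²/c_p⁴)·( 1/4 + Σ_{l=0}^{N−1} (κ_p D/2)^l + 2^{1−N} ); here D_x Γ^ω(x,y)[e] denotes the 3×3 matrix with entries Σ_k e_k ∂/∂x_k Γ^ω(x,y)_{ij}. -/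
noncomputable section
open Real

/-- Directional derivative of `Γ^ω` in the first variable along `u`: the `3×3`
matrix with entries `Σ_k u_k ∂/∂x_k Γ^ω(x,y)_{ij}`. -/
def gradGammaMat (lam mu om : ℝ) (x y : E3) (u : E3) : Matrix (Fin 3) (Fin 3) ℂ :=
  Matrix.of fun i j =>
    ∑ k : Fin 3, ((u k : ℝ) : ℂ) *
      fderiv ℝ (fun x' : E3 => Gamma lam mu om x' y i j) x (EuclideanSpace.single k 1)

def P0 (κ r : ℝ) : ℂ := Complex.exp (Complex.I * κ * r) / r
def P1 (κ r : ℝ) : ℂ := (Complex.I * κ * r - 1) * Complex.exp (Complex.I * κ * r) / r ^ 3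
def P2 (κ r : ℝ) : ℂ :=
  ((Complex.I * κ * r) ^ 2 - 3 * (Complex.I * κ * r) + 3) * Complex.exp (Complex.I * κ * r) / r ^ 5
def P3 (κ r : ℝ) : ℂ :=
  ((Complex.I * κ * r) ^ 3 - 6 * (Complex.I * κ * r) ^ 2 + 15 * (Complex.I * κ * r) - 15)
    * Complex.exp (Complex.I * κ * r) / r ^ 7

lemma hd_lin (κ r : ℝ) : HasDerivAt (fun r : ℝ => Complex.I * κ * (r : ℂ)) (Complex.I * κ) r := by
  simpa using (Complex.ofRealCLM.hasDerivAt (x := r)).const_mul (Complex.I * (κ : ℂ))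

lemma hd_pow (n : ℕ) (r : ℝ) :
    HasDerivAt (fun r : ℝ => (r : ℂ) ^ n) (n * (r : ℂ) ^ (n - 1)) r := by
  simpa using (Complex.ofRealCLM.hasDerivAt (x := r)).fun_pow n

lemma hP0 (κ r : ℝ) (hr : r ≠ 0) : HasDerivAt (P0 κ) (r * P1 κ r) r := by
  have hr' : (r : ℂ) ≠ 0 := by exact_mod_cast hr
  have h := ((hd_lin κ r).cexp).div (Complex.ofRealCLM.hasDerivAt (x := r)) hr'
  refine h.congr_deriv ?_
  simp [P1]
  field_simp

lemma hP1 (κ r : ℝ) (hr : r ≠ 0) : HasDerivAt (P1 κ) (r * P2 κ r) r := by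
  have hr' : (r : ℂ) ≠ 0 := by exact_mod_cast hr
  have h := ((((hd_lin κ r).sub_const 1)).mul (hd_lin κ r).cexp).div (hd_pow 3 r) (pow_ne_zero 3 hr')
  refine h.congr_deriv ?_
  simp [P2]
  field_simp
  ring

lemma hP2 (κ r : ℝ) (hr : r ≠ 0) : HasDerivAt (P2 κ) (r * P3 κ r) r := by
  have hr' : (r : ℂ) ≠ 0 := by exact_mod_cast hr
  have h := ((((((hd_lin κ r).pow 2).sub ((hd_lin κ r).const_mul 3)).add_const 3)).mul
    (hd_lin κ r).cexp).div (hd_pow 5 r) (pow_ne_zero 5 hr')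
  refine h.congr_deriv ?_
  simp [P3]
  field_simp
  ring

def LL (X : E3) : E3 →L[ℝ] ℂ := Complex.ofRealCLM.comp (innerSL ℝ X)

lemma LL_single (X : E3) (k : Fin 3) : LL X (EuclideanSpace.single k 1) = ((X k : ℝ) : ℂ) := by
  simp [LL, EuclideanSpace.inner_single_right]

lemma hf_norm (x y : E3) (hxy : x ≠ y) :
    HasFDerivAt (fun x : E3 => ‖x - y‖) (‖x - y‖⁻¹ • innerSL ℝ (x - y)) x := by
  have hn : ‖x - y‖ ≠ 0 := by simpa [sub_eq_zero] using hxy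
  have h1 : HasFDerivAt (fun x : E3 => ‖x - y‖ ^ 2) (2 • innerSL ℝ (x - y)) x := by
    have := ((hasStrictFDerivAt_norm_sq (x - y)).hasFDerivAt).comp x ((hasFDerivAt_id x).sub_const y)
    exact this
  have h2 := h1.sqrt (pow_ne_zero 2 hn)
  simp only [Real.sqrt_sq (norm_nonneg _)] at h2
  refine h2.congr_fderiv ?_
  ext v
  simp
  field_simp

lemma hf_rad (ψ : ℝ → ℂ) (d : ℂ) (x y : E3) (hxy : x ≠ y)
    (h : HasDerivAt ψ (‖x - y‖ * d) ‖x - y‖) :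
    HasFDerivAt (fun x : E3 => ψ ‖x - y‖) (d • LL (x - y)) x := by
  have hn : (‖x - y‖ : ℂ) ≠ 0 := by exact_mod_cast (by simpa [sub_eq_zero] using hxy : ‖x - y‖ ≠ 0)
  refine (h.hasFDerivAt.comp x (hf_norm x y hxy)).congr_fderiv ?_
  ext v
  simp [LL]
  field_simp

lemma hf_coord (x y : E3) (i : Fin 3) :
    HasFDerivAt (fun x : E3 => (((x - y) i : ℝ) : ℂ)) (LL (EuclideanSpace.single i 1)) x := by
  have h : (fun x : E3 => (((x - y) i : ℝ) : ℂ)) =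
    fun x => LL (EuclideanSpace.single i 1) (x - y) := by
    ext x
    simp [LL, EuclideanSpace.inner_single_left]
  rw [h]
  exact (LL (EuclideanSpace.single i 1)).hasFDerivAt.comp x ((hasFDerivAt_id x).sub_const y)

lemma Phi_eq (κ : ℝ) (y : E3) :
    (fun x : E3 => Phi κ x y) = fun x => (1 / (4 * Real.pi) : ℂ) * P0 κ ‖x - y‖ := by
  ext x
  simp only [Phi, P0]
  rw [div_mul_div_comm, one_mul]

lemma fd_Phi (κ : ℝ) (x y : E3) (hxy : x ≠ y) :
    HasFDerivAt (fun x : E3 => Phi κ x y)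
      ((1 / (4 * Real.pi) : ℂ) • (P1 κ ‖x - y‖ • LL (x - y))) x := by
  have hn : ‖x - y‖ ≠ 0 := by simpa [sub_eq_zero] using hxy
  rw [Phi_eq]
  exact (hf_rad _ _ x y hxy (hP0 κ _ hn)).const_mul _

lemma ev_ne {x y : E3} (hxy : x ≠ y) : ∀ᶠ x' in nhds x, x' ≠ y :=
  isOpen_ne.mem_nhds hxy

def dl (i j : Fin 3) : ℂ := if i = j then 1 else 0

lemma LL_ss (i j : Fin 3) :
    LL (EuclideanSpace.single i 1) (EuclideanSpace.single j 1) = dl i j := by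
  rw [LL_single]
  fin_cases i <;> fin_cases j <;> simp [dl]

lemma fd1 (κ κ' : ℝ) (x y : E3) (hxy : x ≠ y) (j : Fin 3) :
    fderiv ℝ (fun x'' : E3 => Phi κ x'' y - Phi κ' x'' y) x (EuclideanSpace.single j 1)
    = (1 / (4 * Real.pi) : ℂ) *
      ((P1 κ ‖x - y‖ - P1 κ' ‖x - y‖) * (((x - y) j : ℝ) : ℂ)) := by
  rw [((fd_Phi κ x y hxy).fun_sub (fd_Phi κ' x y hxy)).fderiv]
  simp only [sub_apply, smul_apply, LL_single, smul_eq_mul]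
  ring

lemma fd2 (κ κ' : ℝ) (x y : E3) (hxy : x ≠ y) (i j : Fin 3) :
    fderiv ℝ (fun x' : E3 =>
      fderiv ℝ (fun x'' : E3 => Phi κ x'' y - Phi κ' x'' y) x' (EuclideanSpace.single j 1)) x
        (EuclideanSpace.single i 1)
    = (1 / (4 * Real.pi) : ℂ) *
      ((P1 κ ‖x - y‖ - P1 κ' ‖x - y‖) * dl i j
        + (P2 κ ‖x - y‖ - P2 κ' ‖x - y‖) * ((((x - y) i : ℝ) : ℂ) * (((x - y) j : ℝ) : ℂ))) := by
  have hn : ‖x - y‖ ≠ 0 := by simpa [sub_eq_zero] using hxy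
  have he := (ev_ne hxy).mono (fun x' hx' => fd1 κ κ' x' y hx' j)
  rw [Filter.EventuallyEq.fderiv_eq he]
  have h := (((hf_rad _ _ x y hxy (hP1 κ _ hn)).sub (hf_rad _ _ x y hxy (hP1 κ' _ hn))).mul
    (hf_coord x y j)).const_mul (1 / (4 * Real.pi) : ℂ)
  have h' := h.fderiv
  simp only [Pi.sub_apply, Pi.mul_apply] at h'
  erw [h']
  simp only [sub_apply, smul_apply,
    add_apply, LL_single, LL_ss, smul_eq_mul]
  have : dl j i = dl i j := by simp [dl, eq_comm]
  simp only [← LL_single, LL_ss, this]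
  ring

lemma Gamma_eq (lam mu om : ℝ) (x y : E3) (hxy : x ≠ y) (i j : Fin 3) :
    _root_.Gamma lam mu om x y i j = (1 / (4 * Real.pi) : ℂ) *
      ((1 / (mu : ℂ)) * dl i j * P0 (kappaS mu om) ‖x - y‖
       + (1 / (om : ℂ) ^ 2) *
        (dl i j * (P1 (kappaS mu om) ‖x - y‖ - P1 (kappaP lam mu om) ‖x - y‖)
        + (P2 (kappaS mu om) ‖x - y‖ - P2 (kappaP lam mu om) ‖x - y‖)
          * ((((x - y) i : ℝ) : ℂ) * (((x - y) j : ℝ) : ℂ)))) := by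
  unfold _root_.Gamma
  rw [fd2 _ _ x y hxy, congrFun (Phi_eq (kappaS mu om) y) x]
  change _ * _ * dl i j + _ = _
  ring

lemma fd3 (lam mu om : ℝ) (x y : E3) (hxy : x ≠ y) (i j k : Fin 3) :
    fderiv ℝ (fun x' : E3 => Gamma lam mu om x' y i j) x (EuclideanSpace.single k 1)
    = (1 / (4 * Real.pi) : ℂ) *
      ((1 / (mu : ℂ)) * dl i j * (P1 (kappaS mu om) ‖x - y‖ * (((x - y) k : ℝ) : ℂ))
       + (1 / (om : ℂ) ^ 2) *
        ((P2 (kappaS mu om) ‖x - y‖ - P2 (kappaP lam mu om) ‖x - y‖) *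
          ((((x - y) k : ℝ) : ℂ) * dl i j + dl i k * (((x - y) j : ℝ) : ℂ)
            + dl j k * (((x - y) i : ℝ) : ℂ))
        + (P3 (kappaS mu om) ‖x - y‖ - P3 (kappaP lam mu om) ‖x - y‖)
          * ((((x - y) i : ℝ) : ℂ) * (((x - y) j : ℝ) : ℂ) * (((x - y) k : ℝ) : ℂ)))) := by
  have hn : ‖x - y‖ ≠ 0 := by simpa [sub_eq_zero] using hxy
  have he := (ev_ne hxy).mono (fun x' hx' => Gamma_eq lam mu om x' y hx' i j)
  rw [Filter.EventuallyEq.fderiv_eq he]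
  have a0 := hf_rad _ _ x y hxy (hP0 (kappaS mu om) _ hn)
  have a1 := hf_rad _ _ x y hxy (hP1 (kappaS mu om) _ hn)
  have a2 := hf_rad _ _ x y hxy (hP2 (kappaS mu om) _ hn)
  have b1 := hf_rad _ _ x y hxy (hP1 (kappaP lam mu om) _ hn)
  have b2 := hf_rad _ _ x y hxy (hP2 (kappaP lam mu om) _ hn)
  have h := ((a0.const_mul ((1 / (mu : ℂ)) * dl i j)).fun_add
    ((((a1.fun_sub b1).const_mul (dl i j)).fun_add
      ((a2.fun_sub b2).fun_mul ((hf_coord x y i).fun_mul (hf_coord x y j)))).const_mul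
        (1 / (om : ℂ) ^ 2))).const_mul (1 / (4 * Real.pi) : ℂ)
  rw [h.fderiv]
  simp only [sub_apply, smul_apply, add_apply, LL_ss, smul_eq_mul]
  simp only [LL_single]
  ring

lemma opNorm3_add (A B : Matrix (Fin 3) (Fin 3) ℂ) : opNorm3 (A + B) ≤ opNorm3 A + opNorm3 B := by
  unfold opNorm3
  rw [map_add, map_add]
  exact norm_add_le _ _

lemma opNorm3_smul (c : ℂ) (A : Matrix (Fin 3) (Fin 3) ℂ) :
    opNorm3 (c • A) = ‖c‖ * opNorm3 A := by
  unfold opNorm3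
  rw [map_smul, map_smul, norm_smul]

lemma opNorm3_nonneg (A : Matrix (Fin 3) (Fin 3) ℂ) : 0 ≤ opNorm3 A := norm_nonneg _

lemma opNorm3_one : opNorm3 1 ≤ 1 := by
  unfold opNorm3
  refine ContinuousLinearMap.opNorm_le_bound _ zero_le_one fun v => ?_
  simp

def cx (v : E3) : EuclideanSpace ℂ (Fin 3) := WithLp.toLp 2 fun i => ((v i : ℝ) : ℂ)

lemma norm_cx (v : E3) : ‖cx v‖ = ‖v‖ := by
  simp [cx, EuclideanSpace.norm_eq]

def outer (a b : E3) : Matrix (Fin 3) (Fin 3) ℂ :=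
  Matrix.of fun i j => ((a i : ℝ) : ℂ) * ((b j : ℝ) : ℂ)

lemma opNorm3_outer (a b : E3) : opNorm3 (outer a b) ≤ ‖a‖ * ‖b‖ := by
  unfold opNorm3
  refine ContinuousLinearMap.opNorm_le_bound _ (by positivity) fun v => ?_
  have h : (LinearMap.toContinuousLinearMap (Matrix.toEuclideanLin (outer a b))) v
      = (inner ℂ (cx b) v) • cx a := by
    ext i
    simp [Matrix.toLpLin_apply, outer, cx, Matrix.mulVec, dotProduct, PiLp.inner_apply,
      Fin.sum_univ_three]
    ring
  rw [h, norm_smul, norm_cx]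
  have := norm_inner_le_norm (𝕜 := ℂ) (cx b) v
  rw [norm_cx] at this
  nlinarith [norm_nonneg a]

lemma grad_bound (lam mu om : ℝ) (x y : E3) (hxy : x ≠ y) (u : E3) (hu : ‖u‖ = 1) :
    opNorm3 (gradGammaMat lam mu om x y u) ≤ (1 / (4 * Real.pi)) *
      (‖(‖x - y‖ : ℂ) * ((1 / (mu : ℂ)) * P1 (kappaS mu om) ‖x - y‖ + (1 / (om : ℂ) ^ 2) *
          (P2 (kappaS mu om) ‖x - y‖ - P2 (kappaP lam mu om) ‖x - y‖))‖
        + 2 * ‖(‖x - y‖ : ℂ) * ((1 / (om : ℂ) ^ 2) *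
          (P2 (kappaS mu om) ‖x - y‖ - P2 (kappaP lam mu om) ‖x - y‖))‖
        + ‖(‖x - y‖ : ℂ) ^ 3 * ((1 / (om : ℂ) ^ 2) *
          (P3 (kappaS mu om) ‖x - y‖ - P3 (kappaP lam mu om) ‖x - y‖))‖) := by
  set X := x - y with hX
  set p1 := P1 (kappaS mu om) ‖X‖
  set p2 := P2 (kappaS mu om) ‖X‖ - P2 (kappaP lam mu om) ‖X‖
  set p3 := P3 (kappaS mu om) ‖X‖ - P3 (kappaP lam mu om) ‖X‖
  set T : ℝ := inner ℝ X u with hT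
  have hTle : |T| ≤ ‖X‖ := by
    simpa [hu] using abs_real_inner_le_norm X u
  have hTe : (T : ℂ) = (u 0 : ℂ) * (X 0 : ℂ) + (u 1 : ℂ) * (X 1 : ℂ) + (u 2 : ℂ) * (X 2 : ℂ) := by
    rw [hT]
    simp [PiLp.inner_apply, Fin.sum_univ_three]
  have hM : gradGammaMat lam mu om x y u = (1 / (4 * Real.pi) : ℂ) •
      (((T : ℂ) * ((1 / (mu : ℂ)) * p1 + (1 / (om : ℂ) ^ 2) * p2)) • (1 : Matrix (Fin 3) (Fin 3) ℂ)
        + ((1 / (om : ℂ) ^ 2) * p2) • (outer u X + outer X u)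
        + ((T : ℂ) * ((1 / (om : ℂ) ^ 2) * p3)) • outer X X) := by
    ext i j
    simp only [gradGammaMat, Matrix.of_apply, Fin.sum_univ_three, fd3 lam mu om x y hxy,
      Matrix.smul_apply, Matrix.add_apply, outer, smul_eq_mul, hTe, ← hX]
    fin_cases i <;> fin_cases j <;> simp [dl, p1, p2, p3] <;> ring
  rw [hM, opNorm3_smul]
  have hc : ‖(1 / (4 * Real.pi) : ℂ)‖ = 1 / (4 * Real.pi) := by
    simp [abs_of_pos Real.pi_pos]
  rw [hc]
  refine mul_le_mul_of_nonneg_left ?_ (by positivity)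
  have hTn : ‖(T : ℂ)‖ ≤ ‖X‖ := by simpa using hTle
  have hXn : ‖(‖X‖ : ℂ)‖ = ‖X‖ := by simp
  refine (opNorm3_add _ _).trans (add_le_add ((opNorm3_add _ _).trans (add_le_add ?_ ?_)) ?_)
  · rw [opNorm3_smul, norm_mul, norm_mul, hXn]
    have := opNorm3_one
    have h0 := opNorm3_nonneg 1
    calc _ ≤ ‖X‖ * ‖(1 / (mu : ℂ)) * p1 + (1 / (om : ℂ) ^ 2) * p2‖ * 1 := by gcongr
      _ = _ := by rw [mul_one]
  · rw [opNorm3_smul, norm_mul (‖X‖ : ℂ), hXn]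
    have h1 := opNorm3_outer u X
    have h2 := opNorm3_outer X u
    have h3 := opNorm3_add (outer u X) (outer X u)
    rw [hu] at h1 h2
    have : opNorm3 (outer u X + outer X u) ≤ 2 * ‖X‖ := by linarith
    nlinarith [norm_nonneg ((1 / (om : ℂ) ^ 2) * p2)]
  · rw [opNorm3_smul, norm_mul, norm_mul ((‖X‖ : ℂ) ^ 3), norm_pow, hXn]
    have h1 := opNorm3_outer X X
    have h0 := opNorm3_nonneg (outer X X)
    calc _ ≤ ‖X‖ * ‖(1 / (om : ℂ) ^ 2) * p3‖ * (‖X‖ * ‖X‖) := by gcongr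
      _ = _ := by ring

lemma hs_exp (h : ℂ) : HasSum (fun n : ℕ => h ^ n / (n.factorial : ℂ)) (Complex.exp h) := by
  rw [Complex.exp_eq_exp_ℂ]
  exact NormedSpace.expSeries_div_hasSum_exp h

lemma hs_shift (h S : ℂ) (a : ℕ → ℂ)
    (H : HasSum (fun n : ℕ => a (n + 1) * (h ^ n / (n.factorial : ℂ))) S) :
    HasSum (fun n : ℕ => (n : ℂ) * a n * (h ^ n / (n.factorial : ℂ))) (h * S) := by
  rw [← hasSum_nat_add_iff' 1]
  simp only [Finset.range_one, Finset.sum_singleton, Nat.cast_zero, zero_mul, sub_zero]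
  refine (H.mul_left h).congr_fun ?_
  intro n
  have h1 : ((n : ℂ) + 1) ≠ 0 := by exact_mod_cast Nat.succ_ne_zero n
  have h2 : (n.factorial : ℂ) ≠ 0 := by exact_mod_cast n.factorial_ne_zero
  rw [Nat.factorial_succ]
  push_cast
  field_simp
  ring

lemma hs1 (h : ℂ) :
    HasSum (fun n : ℕ => (n : ℂ) * (h ^ n / (n.factorial : ℂ))) (h * Complex.exp h) := by
  have := hs_shift h _ (fun _ => 1) (by simpa using hs_exp h)
  simpa using this

lemma hs2 (h : ℂ) :
    HasSum (fun n : ℕ => (n : ℂ) * (n - 1) * (h ^ n / (n.factorial : ℂ)))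
      (h * (h * Complex.exp h)) :=
  hs_shift h _ (fun n => (n : ℂ) - 1) (by simpa using hs1 h)

lemma hs3 (h : ℂ) :
    HasSum (fun n : ℕ => (n : ℂ) * ((n - 1) * (n - 2)) * (h ^ n / (n.factorial : ℂ)))
      (h * (h * (h * Complex.exp h))) :=
  hs_shift h _ (fun n => ((n : ℂ) - 1) * (n - 2)) (by
    refine (hs2 h).congr_fun fun n => ?_
    push_cast
    ring)

lemma hsA (h : ℂ) : HasSum (fun n : ℕ => ((n : ℂ) - 1) * (h ^ n / (n.factorial : ℂ)))
    ((h - 1) * Complex.exp h) := by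
  have := (hs1 h).sub (hs_exp h)
  rw [show (h - 1) * Complex.exp h = h * Complex.exp h - Complex.exp h by ring]
  exact this.congr_fun fun n => by ring

lemma hsC (h : ℂ) : HasSum (fun n : ℕ => ((n : ℂ) - 1) * (n - 3) * (h ^ n / (n.factorial : ℂ)))
    ((h ^ 2 - 3 * h + 3) * Complex.exp h) := by
  have := ((hs2 h).sub ((hs1 h).mul_left 3)).add ((hs_exp h).mul_left 3)
  rw [show (h ^ 2 - 3 * h + 3) * Complex.exp h
    = h * (h * Complex.exp h) - 3 * (h * Complex.exp h) + 3 * Complex.exp h by ring]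
  exact this.congr_fun fun n => by ring

lemma hsE (h : ℂ) : HasSum (fun n : ℕ => ((n : ℂ) - 1) * (n - 3) * (n - 5)
      * (h ^ n / (n.factorial : ℂ)))
    ((h ^ 3 - 6 * h ^ 2 + 15 * h - 15) * Complex.exp h) := by
  have := (((hs3 h).sub ((hs2 h).mul_left 6)).add ((hs1 h).mul_left 15)).sub
    ((hs_exp h).mul_left 15)
  rw [show (h ^ 3 - 6 * h ^ 2 + 15 * h - 15) * Complex.exp h
    = h * (h * (h * Complex.exp h)) - 6 * (h * (h * Complex.exp h)) + 15 * (h * Complex.exp h)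
      - 15 * Complex.exp h by ring]
  exact this.congr_fun fun n => by ring

lemma hs_exp_real (z : ℝ) : HasSum (fun n : ℕ => z ^ n / (n.factorial : ℝ)) (Real.exp z) := by
  rw [Real.exp_eq_exp_ℝ]
  exact NormedSpace.expSeries_div_hasSum_exp z

lemma tail_bound (a : ℕ → ℂ) (S : ℂ) (k : ℕ) (K z : ℝ) (H : HasSum a S)
    (hb : ∀ n, ‖a (n + k)‖ ≤ K * (z ^ n / (n.factorial : ℝ))) :
    ‖S - ∑ i ∈ Finset.range k, a i‖ ≤ K * Real.exp z := by
  have h1 := (hasSum_nat_add_iff' k).2 H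
  exact h1.norm_le_of_bounded ((hs_exp_real z).mul_left K) hb

lemma bA (z : ℝ) (hz : 0 ≤ z) :
    ‖(Complex.I * z - 1) * Complex.exp (Complex.I * z) + 1‖ ≤ z ^ 2 / 2 * Real.exp z := by
  have := tail_bound _ _ 2 (z ^ 2 / 2) z (hsA (Complex.I * z)) (fun n => by
    have h2 : (0 : ℝ) < n.factorial := by exact_mod_cast n.factorial_pos
    have e : ((((n + 2 : ℕ) : ℂ)) - 1) = ((n + 1 : ℝ) : ℂ) := by push_cast; ring
    rw [e, norm_mul, norm_div, norm_pow, norm_mul, Complex.norm_I, one_mul, Complex.norm_real,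
      Complex.norm_real, Complex.norm_natCast, Real.norm_of_nonneg hz,
      Real.norm_of_nonneg (by positivity), Nat.factorial_succ, Nat.factorial_succ]
    push_cast
    rw [show ((n : ℝ) + 1) * (z ^ (n + 2) / ((n + 1 + 1) * ((n + 1) * n.factorial)))
      = (z ^ 2 * (z ^ n / n.factorial)) * (1 / (n + 2)) by field_simp; ring,
      show z ^ 2 / 2 * (z ^ n / n.factorial) = (z ^ 2 * (z ^ n / n.factorial)) * (1 / 2) by ring]
    gcongr
    linarith [(Nat.cast_nonneg n : (0 : ℝ) ≤ n)])
  simpa [Finset.sum_range_succ] using this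

lemma norm_diff (z w : ℝ) (hw : 0 ≤ w) (hwz : w ≤ z) (n : ℕ) :
    ‖(Complex.I * z) ^ n - (Complex.I * w) ^ n‖ ≤ z ^ n := by
  have e : (Complex.I * z) ^ n - (Complex.I * w) ^ n = Complex.I ^ n * ((z ^ n - w ^ n : ℝ) : ℂ) := by
    push_cast; ring
  have h1 : w ^ n ≤ z ^ n := by gcongr
  have h2 : 0 ≤ w ^ n := by positivity
  rw [e, norm_mul, norm_pow, Complex.norm_I, one_pow, one_mul, Complex.norm_real,
    Real.norm_of_nonneg (by linarith)]
  linarith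

lemma fac4 (n : ℕ) : (((n + 4).factorial : ℕ) : ℝ)
    = (n + 4) * (n + 3) * (n + 2) * (n + 1) * n.factorial := by
  simp only [Nat.factorial_succ]
  push_cast
  ring

lemma bC (z w : ℝ) (hw : 0 ≤ w) (hwz : w ≤ z) :
    ‖(((Complex.I * z) ^ 2 - 3 * (Complex.I * z) + 3) * Complex.exp (Complex.I * z)
      - ((Complex.I * w) ^ 2 - 3 * (Complex.I * w) + 3) * Complex.exp (Complex.I * w))
      - ((z ^ 2 - w ^ 2) / 2 : ℝ)‖ ≤ z ^ 4 / 8 * Real.exp z := by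
  have hz := hw.trans hwz
  have := tail_bound _ _ 4 (z ^ 4 / 8) z ((hsC (Complex.I * z)).sub (hsC (Complex.I * w)))
    (fun n => by
    have h2 : (0 : ℝ) < n.factorial := by exact_mod_cast n.factorial_pos
    have hn : (0 : ℝ) ≤ n := Nat.cast_nonneg n
    have e : ((((n + 4 : ℕ) : ℂ)) - 1) * (((n + 4 : ℕ) : ℂ) - 3) = (((n + 3) * (n + 1) : ℝ) : ℂ) := by
      push_cast; ring
    rw [← mul_sub, ← sub_div, e, norm_mul, norm_div, Complex.norm_real, Complex.norm_natCast,
      Real.norm_of_nonneg (by positivity), fac4]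
    calc _ ≤ ((n + 3) * (n + 1) : ℝ) * (z ^ (n + 4) / ((n + 4) * (n + 3) * (n + 2) * (n + 1) * n.factorial)) := by
            gcongr
            exact norm_diff z w hw hwz _
      _ = (z ^ 4 * (z ^ n / n.factorial)) * (1 / ((n + 2) * (n + 4))) := by field_simp; ring
      _ ≤ (z ^ 4 * (z ^ n / n.factorial)) * (1 / 8) := by
            gcongr
            nlinarith
      _ = _ := by ring)
  convert this using 2
  simp [Finset.sum_range_succ, mul_pow]
  ring

lemma bE (z w : ℝ) (hw : 0 ≤ w) (hwz : w ≤ z) :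
    ‖(((Complex.I * z) ^ 3 - 6 * (Complex.I * z) ^ 2 + 15 * (Complex.I * z) - 15)
        * Complex.exp (Complex.I * z)
      - ((Complex.I * w) ^ 3 - 6 * (Complex.I * w) ^ 2 + 15 * (Complex.I * w) - 15)
        * Complex.exp (Complex.I * w))
      + (3 * (z ^ 2 - w ^ 2) / 2 : ℝ)‖ ≤ z ^ 4 / 8 * Real.exp z := by
  have hz := hw.trans hwz
  have := tail_bound _ _ 4 (z ^ 4 / 8) z ((hsE (Complex.I * z)).sub (hsE (Complex.I * w)))
    (fun n => by
    have h2 : (0 : ℝ) < n.factorial := by exact_mod_cast n.factorial_pos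
    have hn : (0 : ℝ) ≤ n := Nat.cast_nonneg n
    have e : ((((n + 4 : ℕ) : ℂ)) - 1) * (((n + 4 : ℕ) : ℂ) - 3) * (((n + 4 : ℕ) : ℂ) - 5)
      = (((n + 3) * (n + 1) * (n - 1) : ℝ) : ℂ) := by
      push_cast; ring
    have hab : |(n : ℝ) - 1| * 8 ≤ (n + 2) * (n + 4) := by
      rcases abs_cases ((n : ℝ) - 1) with h | h <;> nlinarith [sq_nonneg ((n : ℝ) - 1)]
    rw [← mul_sub, ← sub_div, e, norm_mul, norm_div, Complex.norm_real, Complex.norm_natCast,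
      norm_mul, Real.norm_of_nonneg (by positivity), fac4, Real.norm_eq_abs]
    calc _ ≤ ((n + 3) * (n + 1) * |(n : ℝ) - 1| : ℝ) * (z ^ (n + 4) / ((n + 4) * (n + 3) * (n + 2) * (n + 1) * n.factorial)) := by
            gcongr
            exact norm_diff z w hw hwz _
      _ = (z ^ 4 * (z ^ n / n.factorial)) * (|(n : ℝ) - 1| / ((n + 2) * (n + 4))) := by field_simp; ring
      _ ≤ (z ^ 4 * (z ^ n / n.factorial)) * (1 / 8) := by
            refine mul_le_mul_of_nonneg_left ?_ (by positivity)
            rw [div_le_div_iff₀ (by positivity) (by norm_num)]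
            linarith
      _ = _ := by ring)
  convert this using 2
  simp [Finset.sum_range_succ, mul_pow]
  ring

lemma two_pow_le (l : ℕ) : (2 : ℝ) ^ l ≤ 2 * l.factorial := by
  induction l with
  | zero => norm_num
  | succ k ih =>
    rcases Nat.eq_zero_or_pos k with rfl | hk
    · norm_num
    · rw [pow_succ, Nat.factorial_succ]
      push_cast
      have : (1 : ℝ) ≤ k := by exact_mod_cast hk
      have h2 : (0 : ℝ) < k.factorial := by exact_mod_cast k.factorial_pos
      nlinarith

lemma tail_term (Z : ℝ) (hZ : 0 ≤ Z) (l : ℕ) (h : 2 * Z * Real.exp 1 ^ 2 ≤ l + 1) :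
    Z ^ l / (l.factorial : ℝ) ≤ (1 / 2) ^ l := by
  have h2 : (0 : ℝ) < l.factorial := by exact_mod_cast l.factorial_pos
  rcases Nat.eq_zero_or_pos l with rfl | hl
  · norm_num
  have h3 : ((l : ℝ) + 1) ^ l / l.factorial ≤ Real.exp (l + 1) :=
    Real.pow_div_factorial_le_exp _ (by positivity) l
  have h4 : (2 * Z) ^ l * Real.exp 1 ^ (2 * l) ≤ ((l : ℝ) + 1) ^ l := by
    rw [pow_mul, ← mul_pow]
    gcongr
  have h5 : Real.exp (l + 1) ≤ Real.exp 1 ^ (2 * l) := by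
    rw [← Real.exp_nat_mul]
    apply Real.exp_le_exp.2
    push_cast
    have : (1 : ℝ) ≤ l := by exact_mod_cast hl
    linarith
  rw [div_le_iff₀ h2] at h3
  have h6 : 0 < Real.exp 1 ^ (2 * l) := by positivity
  have h7 : (2 * Z) ^ l ≤ l.factorial := by
    by_contra hc
    push Not at hc
    nlinarith
  rw [mul_pow] at h7
  rw [div_le_iff₀ h2, one_div, inv_pow, inv_mul_eq_div, le_div_iff₀ (by positivity)]
  linarith

lemma exp_bound (Z : ℝ) (hZ : 0 ≤ Z) (N : ℕ) (h : 2 * Z * Real.exp 1 ^ 2 ≤ N + 1) :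
    Real.exp Z ≤ 2 * (∑ l ∈ Finset.range N, (Z / 2) ^ l) + (2 : ℝ) ^ ((1 : ℤ) - (N : ℤ)) := by
  have h1 := (hasSum_nat_add_iff' N).2 (hs_exp_real Z)
  have h2 : HasSum (fun n : ℕ => (1 / 2 : ℝ) ^ N * (1 / 2 : ℝ) ^ n) ((1 / 2 : ℝ) ^ N * 2) :=
    hasSum_geometric_two.mul_left _
  have h3 := hasSum_le (fun n => by
    have := tail_term Z hZ (n + N) (by push_cast; linarith [(Nat.cast_nonneg n : (0 : ℝ) ≤ n)])
    rw [pow_add (1 / 2 : ℝ), mul_comm ((1 / 2 : ℝ) ^ n)] at this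
    exact this) h1 h2
  have h4 : ∑ l ∈ Finset.range N, Z ^ l / (l.factorial : ℝ)
      ≤ 2 * ∑ l ∈ Finset.range N, (Z / 2) ^ l := by
    rw [Finset.mul_sum]
    refine Finset.sum_le_sum fun l _ => ?_
    have h2 : (0 : ℝ) < l.factorial := by exact_mod_cast l.factorial_pos
    rw [div_pow, ← mul_div_assoc, div_le_div_iff₀ h2 (by positivity)]
    nlinarith [two_pow_le l, pow_nonneg hZ l]
  have h5 : (2 : ℝ) ^ ((1 : ℤ) - (N : ℤ)) = (1 / 2 : ℝ) ^ N * 2 := by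
    rw [zpow_sub₀ (by norm_num)]
    simp
    ring
  rw [h5]
  linarith

lemma core (mu om ks kp r : ℝ) (hom : 0 < om) (hkp : 0 ≤ kp) (hk : kp ≤ ks) (hr : 0 < r)
    (hmu : 1 / mu = ks ^ 2 / om ^ 2) :
    ‖(r : ℂ) * ((1 / (mu : ℂ)) * P1 ks r + (1 / (om : ℂ) ^ 2) * (P2 ks r - P2 kp r))‖
        + 2 * ‖(r : ℂ) * ((1 / (om : ℂ) ^ 2) * (P2 ks r - P2 kp r))‖
        + ‖(r : ℂ) ^ 3 * ((1 / (om : ℂ) ^ 2) * (P3 ks r - P3 kp r))‖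
    ≤ 3 * (ks ^ 2 / om ^ 2) / r ^ 2 + ks ^ 4 / om ^ 2 * Real.exp (ks * r) := by
  have hks := hkp.trans hk
  have hw : 0 ≤ kp * r := by positivity
  have hwz : kp * r ≤ ks * r := by gcongr
  have hA := bA (ks * r) (by positivity)
  have hC := bC (ks * r) (kp * r) hw hwz
  have hE := bE (ks * r) (kp * r) hw hwz
  have hmu' : 1 / (mu : ℂ) = (ks : ℂ) ^ 2 / (om : ℂ) ^ 2 := by exact_mod_cast hmu
  have hrC : (r : ℂ) ≠ 0 := by exact_mod_cast hr.ne'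
  have hoC : (om : ℂ) ≠ 0 := by exact_mod_cast hom.ne'
  set cA := (Complex.I * ((ks * r : ℝ) : ℂ) - 1) * Complex.exp (Complex.I * ((ks * r : ℝ) : ℂ))
    with hcA
  set cC := (((Complex.I * ((ks * r : ℝ) : ℂ)) ^ 2 - 3 * (Complex.I * ((ks * r : ℝ) : ℂ)) + 3)
      * Complex.exp (Complex.I * ((ks * r : ℝ) : ℂ))
      - ((Complex.I * ((kp * r : ℝ) : ℂ)) ^ 2 - 3 * (Complex.I * ((kp * r : ℝ) : ℂ)) + 3)
      * Complex.exp (Complex.I * ((kp * r : ℝ) : ℂ))) with hcC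
  set cE := (((Complex.I * ((ks * r : ℝ) : ℂ)) ^ 3 - 6 * (Complex.I * ((ks * r : ℝ) : ℂ)) ^ 2
        + 15 * (Complex.I * ((ks * r : ℝ) : ℂ)) - 15)
        * Complex.exp (Complex.I * ((ks * r : ℝ) : ℂ))
      - ((Complex.I * ((kp * r : ℝ) : ℂ)) ^ 3 - 6 * (Complex.I * ((kp * r : ℝ) : ℂ)) ^ 2
        + 15 * (Complex.I * ((kp * r : ℝ) : ℂ)) - 15)
        * Complex.exp (Complex.I * ((kp * r : ℝ) : ℂ))) with hcE
  have e1 : P1 ks r = cA / r ^ 3 := by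
    rw [hcA, P1]; push_cast; simp only [mul_assoc]
  have e2 : P2 ks r - P2 kp r = cC / r ^ 5 := by
    rw [hcC, P2, P2]; push_cast; simp only [← mul_assoc]; ring
  have e3 : P3 ks r - P3 kp r = cE / r ^ 7 := by
    rw [hcE, P3, P3]; push_cast; simp only [← mul_assoc]; ring
  rw [e1, e2, e3, hmu']
  clear_value cA cC cE
  set G := ks ^ 4 / om ^ 2 * Real.exp (ks * r) with hG
  set dC := cC - (((ks * r) ^ 2 - (kp * r) ^ 2) / 2 : ℝ) with hdC
  set dE := cE + (3 * ((ks * r) ^ 2 - (kp * r) ^ 2) / 2 : ℝ) with hdE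
  have nA : ‖((ks ^ 2 / om ^ 2 / r ^ 2 : ℝ) : ℂ) * (cA + 1)‖ ≤ G / 2 := by
    rw [norm_mul, Complex.norm_real, Real.norm_of_nonneg (by positivity)]
    calc _ ≤ ks ^ 2 / om ^ 2 / r ^ 2 * ((ks * r) ^ 2 / 2 * Real.exp (ks * r)) := by gcongr
      _ = _ := by rw [hG]; field_simp
  have nC : ‖((1 / om ^ 2 / r ^ 4 : ℝ) : ℂ) * dC‖ ≤ G / 8 := by
    rw [norm_mul, Complex.norm_real, Real.norm_of_nonneg (by positivity)]
    calc _ ≤ 1 / om ^ 2 / r ^ 4 * ((ks * r) ^ 4 / 8 * Real.exp (ks * r)) := by gcongr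
      _ = _ := by rw [hG]; field_simp
  have nE : ‖((1 / om ^ 2 / r ^ 4 : ℝ) : ℂ) * dE‖ ≤ G / 8 := by
    rw [norm_mul, Complex.norm_real, Real.norm_of_nonneg (by positivity)]
    calc _ ≤ 1 / om ^ 2 / r ^ 4 * ((ks * r) ^ 4 / 8 * Real.exp (ks * r)) := by gcongr
      _ = _ := by rw [hG]; field_simp
  set q := 1 / om ^ 2 / r ^ 2 with hq
  have hq0 : 0 ≤ q := by positivity
  have hk2 : kp ^ 2 ≤ ks ^ 2 := by gcongr
  have nn1 : ‖((-(q * (ks ^ 2 + kp ^ 2) / 2) : ℝ) : ℂ)‖ = q * (ks ^ 2 + kp ^ 2) / 2 := by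
    rw [Complex.norm_real, norm_neg, Real.norm_of_nonneg (by positivity)]
  have nn2 : ‖((q * (ks ^ 2 - kp ^ 2) / 2 : ℝ) : ℂ)‖ = q * (ks ^ 2 - kp ^ 2) / 2 := by
    rw [Complex.norm_real, Real.norm_of_nonneg]
    have := mul_nonneg hq0 (sub_nonneg.2 hk2)
    linarith
  have nn3 : ‖((-(3 * (q * (ks ^ 2 - kp ^ 2) / 2)) : ℝ) : ℂ)‖ = 3 * (q * (ks ^ 2 - kp ^ 2) / 2) := by
    rw [Complex.norm_real, norm_neg, Real.norm_of_nonneg]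
    have := mul_nonneg hq0 (sub_nonneg.2 hk2)
    linarith
  have t1 : (r : ℂ) * ((ks : ℂ) ^ 2 / (om : ℂ) ^ 2 * (cA / r ^ 3) + (1 / (om : ℂ) ^ 2) * (cC / r ^ 5))
      = ((ks ^ 2 / om ^ 2 / r ^ 2 : ℝ) : ℂ) * (cA + 1) + ((1 / om ^ 2 / r ^ 4 : ℝ) : ℂ) * dC
        + ((-(q * (ks ^ 2 + kp ^ 2) / 2) : ℝ) : ℂ) := by
    rw [hdC, hq]; push_cast; field_simp; ring
  have t2 : (r : ℂ) * ((1 / (om : ℂ) ^ 2) * (cC / r ^ 5))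
      = ((1 / om ^ 2 / r ^ 4 : ℝ) : ℂ) * dC + ((q * (ks ^ 2 - kp ^ 2) / 2 : ℝ) : ℂ) := by
    rw [hdC, hq]; push_cast; field_simp; ring
  have t3 : (r : ℂ) ^ 3 * ((1 / (om : ℂ) ^ 2) * (cE / r ^ 7))
      = ((1 / om ^ 2 / r ^ 4 : ℝ) : ℂ) * dE
        + ((-(3 * (q * (ks ^ 2 - kp ^ 2) / 2)) : ℝ) : ℂ) := by
    rw [hdE, hq]; push_cast; field_simp; ring
  rw [t1, t2, t3]
  have m1 := norm_add₃_le (a := ((ks ^ 2 / om ^ 2 / r ^ 2 : ℝ) : ℂ) * (cA + 1))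
    (b := ((1 / om ^ 2 / r ^ 4 : ℝ) : ℂ) * dC) (c := ((-(q * (ks ^ 2 + kp ^ 2) / 2) : ℝ) : ℂ))
  have m2 := norm_add_le (((1 / om ^ 2 / r ^ 4 : ℝ) : ℂ) * dC)
    ((q * (ks ^ 2 - kp ^ 2) / 2 : ℝ) : ℂ)
  have m3 := norm_add_le (((1 / om ^ 2 / r ^ 4 : ℝ) : ℂ) * dE)
    ((-(3 * (q * (ks ^ 2 - kp ^ 2) / 2)) : ℝ) : ℂ)
  rw [nn1] at m1
  rw [nn2] at m2
  rw [nn3] at m3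
  have f : 3 * (ks ^ 2 / om ^ 2) / r ^ 2 = 3 * (q * ks ^ 2) := by rw [hq]; ring
  rw [f]
  nlinarith [mul_nonneg hq0 (sq_nonneg kp)]

/-- The gradient estimate (gradkupradzeten1dfnt): for `0 < |x−y| ≤ D` and a
unit vector `u`, `‖D_xΓ^ω(x,y)[u]‖ ≤ (1/(4π))(C₉/|x−y|² + C₁₀)` with
`C₉ = 3(1/c_s² + 1/c_p²)` and
`C₁₀ = 2(ω²/c_s⁴)(1/8 + Σ_{l<N}(κ_s D/2)^l + 2^{1−N}) + (ω²/c_p⁴)(1/4 + Σ_{l<N}(κ_p D/2)^l + 2^{1−N})`. -/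
theorem grad_gamma_opNorm_bound (lam mu om D : ℝ) (hmu : 0 < mu)
    (hlm : 0 < 3 * lam + 2 * mu) (hom : 0 < om) (hD : 0 < D)
    (x y : E3) (hxy : x ≠ y) (hle : ‖x - y‖ ≤ D)
    (u : E3) (hu : ‖u‖ = 1) :
    opNorm3 (gradGammaMat lam mu om x y u)
      ≤ (1 / (4 * Real.pi)) *
        ((3 * (1 / cS mu ^ 2 + 1 / cP lam mu ^ 2)) / ‖x - y‖ ^ 2
          + (2 * (om ^ 2 / cS mu ^ 4) *
              (1 / 8
                + (∑ l ∈ Finset.range (NOm lam mu om D), (kappaS mu om * D / 2) ^ l)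
                + (2 : ℝ) ^ ((1 : ℤ) - (NOm lam mu om D : ℤ)))
            + (om ^ 2 / cP lam mu ^ 4) *
              (1 / 4
                + (∑ l ∈ Finset.range (NOm lam mu om D), (kappaP lam mu om * D / 2) ^ l)
                + (2 : ℝ) ^ ((1 : ℤ) - (NOm lam mu om D : ℤ))))) := by
  have hlm2 : mu < lam + 2 * mu := by linarith
  have hS : 0 < cS mu := Real.sqrt_pos.2 hmu
  have hSP : cS mu ≤ cP lam mu := Real.sqrt_le_sqrt hlm2.le
  have hP : 0 < cP lam mu := hS.trans_le hSP
  have hr : 0 < ‖x - y‖ := by simpa [sub_eq_zero] using hxy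
  have hks : 0 < kappaS mu om := div_pos hom hS
  have hkp : 0 < kappaP lam mu om := div_pos hom hP
  have hk : kappaP lam mu om ≤ kappaS mu om := by
    unfold kappaP kappaS
    gcongr
  have hsq : cS mu ^ 2 = mu := Real.sq_sqrt hmu.le
  have h2 : kappaS mu om ^ 2 / om ^ 2 = 1 / cS mu ^ 2 := by
    unfold kappaS
    field_simp
  have h4 : kappaS mu om ^ 4 / om ^ 2 = om ^ 2 / cS mu ^ 4 := by
    unfold kappaS
    field_simp
  refine (grad_bound lam mu om x y hxy u hu).trans ?_
  refine mul_le_mul_of_nonneg_left ?_ (by positivity)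
  refine (core mu om (kappaS mu om) (kappaP lam mu om) ‖x - y‖ hom hkp.le hk hr
    (by rw [h2, hsq])).trans ?_
  rw [h2, h4]
  have hN : 2 * (kappaS mu om * D) * Real.exp 1 ^ 2 ≤ (NOm lam mu om D : ℕ) + 1 := by
    have := (Nat.lt_floor_add_one
      (2 * D * max (kappaS mu om) (kappaP lam mu om) * Real.exp 1 ^ 2)).le
    rw [max_eq_left hk] at this
    unfold NOm
    rw [max_eq_left hk]
    linarith
  have hexp := exp_bound (kappaS mu om * D) (by positivity) _ hN
  have hmono : Real.exp (kappaS mu om * ‖x - y‖) ≤ Real.exp (kappaS mu om * D) := by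
    gcongr
  have hz : (0 : ℝ) < (2 : ℝ) ^ ((1 : ℤ) - (NOm lam mu om D : ℤ)) := by positivity
  refine add_le_add ?_ ?_
  · gcongr
    have : 0 ≤ 1 / cP lam mu ^ 2 := by positivity
    linarith
  · have hp : 0 ≤ (om ^ 2 / cP lam mu ^ 4) *
              (1 / 4
                + (∑ l ∈ Finset.range (NOm lam mu om D), (kappaP lam mu om * D / 2) ^ l)
                + (2 : ℝ) ^ ((1 : ℤ) - (NOm lam mu om D : ℤ))) := by positivity
    have hq : 0 ≤ om ^ 2 / cS mu ^ 4 := by positivity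
    have := mul_le_mul_of_nonneg_left (show Real.exp (kappaS mu om * ‖x - y‖) ≤ 2 * (1 / 8
                + (∑ l ∈ Finset.range (NOm lam mu om D), (kappaS mu om * D / 2) ^ l)
                + (2 : ℝ) ^ ((1 : ℤ) - (NOm lam mu om D : ℤ))) by linarith) hq
    linarith

end
end

section
/- For all x, y ∈ ℝ³ with x ≠ y and κ_s·|x−y| < 2, the operator norm of the difference between the Kupradze matrix and the Kelvin matrix satisfies ‖Γ^ω(x,y) − Γ⁰(x,y)‖ ≤ (ω/(4π))·[ (2/c_s³)·(1 − κ_s|x−y|/2)^{−1} + (1/c_p³)·(1 − κ_p|x−y|/2)^{−1} ]. -/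
noncomputable section
open Real

/-- The Kelvin matrix (Kupradze matrix at zero frequency):
`Γ⁰(x,y)_{ij} = (1/(8π))[(1/c_s²+1/c_p²)δ_{ij}/|x−y| + (1/c_s²−1/c_p²)(x_i−y_i)(x_j−y_j)/|x−y|³]`. -/
def Gamma0Mat (lam mu : ℝ) (x y : E3) : Matrix (Fin 3) (Fin 3) ℂ :=
  Matrix.of fun i j =>
    (((1 / (8 * Real.pi)) *
        ((1 / cS mu ^ 2 + 1 / cP lam mu ^ 2) * (if i = j then 1 else 0) / ‖x - y‖
          + (1 / cS mu ^ 2 - 1 / cP lam mu ^ 2) * (x i - y i) * (x j - y j)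
              / ‖x - y‖ ^ 3) : ℝ) : ℂ)

/-- Estimate for `Γ^ω − Γ⁰`: for `x ≠ y` with `κ_s|x−y| < 2`,
`‖Γ^ω(x,y) − Γ⁰(x,y)‖ ≤ (ω/(4π))[(2/c_s³)(1−κ_s|x−y|/2)⁻¹ + (1/c_p³)(1−κ_p|x−y|/2)⁻¹]`. -/

lemma gk_congr {f g : ℕ → ℂ} {A B : ℂ} (h : HasSum f A) (e : ∀ n, g n = f n) (e' : B = A) :
    HasSum g B := by
  rw [e', funext e]; exact h

lemma gk_hasSum_exp (z : ℂ) : HasSum (fun n : ℕ => z ^ n / (n.factorial : ℂ)) (Complex.exp z) := by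
  rw [Complex.exp_eq_exp_ℂ]
  exact NormedSpace.expSeries_div_hasSum_exp z

lemma gk_hasSum_psi (z : ℂ) (hz : z ≠ 0) :
    HasSum (fun n : ℕ => (1 / ((n : ℂ) + 2)) * (z ^ n / (n.factorial : ℂ)))
      ((Complex.exp z * (z - 1) + 1) / z ^ 2) := by
  have h := gk_hasSum_exp z
  have h1 := (hasSum_nat_add_iff' 1).2 (h.mul_left z)
  have h2 := (hasSum_nat_add_iff' 2).2 h
  have h3 := (h1.sub h2).div_const (z ^ 2)
  refine gk_congr h3 (fun n => ?_) ?_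
  · have hf : (n.factorial : ℂ) ≠ 0 := by exact_mod_cast n.factorial_ne_zero
    have h4 : (n : ℂ) + 1 ≠ 0 := by exact_mod_cast n.succ_ne_zero
    have h5 : (n : ℂ) + 2 ≠ 0 := by exact_mod_cast (n + 1).succ_ne_zero
    have e1 : ((n + 1).factorial : ℂ) = (n + 1) * n.factorial := by
      rw [Nat.factorial_succ]; push_cast; ring
    have e2 : ((n + 2).factorial : ℂ) = (n + 2) * ((n + 1) * n.factorial) := by
      rw [Nat.factorial_succ, Nat.factorial_succ]; push_cast; ring
    rw [e1, e2]
    field_simp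
    ring
  · simp [Finset.sum_range_succ]
    ring

lemma gk_bound (z : ℂ) (a b : ℕ → ℂ) (A B : ℂ) (C : ℝ)
    (hA : HasSum (fun n : ℕ => a n * (z ^ n / (n.factorial : ℂ))) A)
    (hB : HasSum (fun n : ℕ => b n * (z ^ n / (n.factorial : ℂ))) B)
    (hC : ∀ n, ‖a (n + 1)‖ + ‖b (n + 1)‖ ≤ C) (hz : ‖z‖ < 2) :
    ‖A - a 0‖ + ‖B - b 0‖ ≤ C * (‖z‖ * (1 - ‖z‖ / 2)⁻¹) := by
  have hg : HasSum (fun n : ℕ => C * (‖z‖ * (‖z‖ / 2) ^ n)) (C * (‖z‖ * (1 - ‖z‖ / 2)⁻¹)) :=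
    ((hasSum_geometric_of_lt_one (by positivity) (by linarith)).mul_left _).mul_left _
  have key : ∀ n : ℕ, ‖z ^ (n + 1) / ((n + 1).factorial : ℂ)‖ ≤ ‖z‖ * (‖z‖ / 2) ^ n := by
    intro n
    have h2 : (2 : ℝ) ^ n ≤ ((n + 1).factorial : ℝ) := by
      have h : ∀ n : ℕ, 2 ^ n ≤ (n + 1).factorial := by
        intro n
        induction n with
        | zero => simp
        | succ k ih =>
          rw [Nat.factorial_succ, pow_succ]
          nlinarith
      exact_mod_cast h n
    rw [norm_div, norm_pow, Complex.norm_natCast, div_pow, pow_succ', mul_div_assoc]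
    gcongr
  have hA1 := (hasSum_nat_add_iff' 1).2 hA
  have hB1 := (hasSum_nat_add_iff' 1).2 hB
  simp only [Finset.sum_range_one, pow_zero, Nat.factorial_zero, Nat.cast_one, div_one, mul_one]
    at hA1 hB1
  have kk : ∀ n : ℕ, ‖a (n + 1) * (z ^ (n + 1) / ((n + 1).factorial : ℂ))‖
      + ‖b (n + 1) * (z ^ (n + 1) / ((n + 1).factorial : ℂ))‖ ≤ C * (‖z‖ * (‖z‖ / 2) ^ n) := by
    intro n
    rw [norm_mul, norm_mul, ← add_mul]
    have : 0 ≤ C := le_trans (by positivity) (hC 0)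
    exact mul_le_mul (hC n) (key n) (norm_nonneg _) this
  have sA : Summable (fun n : ℕ => ‖a (n + 1) * (z ^ (n + 1) / ((n + 1).factorial : ℂ))‖) :=
    Summable.of_nonneg_of_le (fun _ => norm_nonneg _)
      (fun n => le_trans (le_add_of_nonneg_right (norm_nonneg _)) (kk n)) hg.summable
  have sB : Summable (fun n : ℕ => ‖b (n + 1) * (z ^ (n + 1) / ((n + 1).factorial : ℂ))‖) :=
    Summable.of_nonneg_of_le (fun _ => norm_nonneg _)
      (fun n => le_trans (le_add_of_nonneg_left (norm_nonneg _)) (kk n)) hg.summable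
  have n1 := norm_tsum_le_tsum_norm sA
  have n2 := norm_tsum_le_tsum_norm sB
  rw [hA1.tsum_eq] at n1
  rw [hB1.tsum_eq] at n2
  have := hasSum_le kk (sA.hasSum.add sB.hasSum) hg
  linarith

/-- The auxiliary function psi. -/
def gkPsi (z : ℂ) : ℂ := (Complex.exp z * (z - 1) + 1) / z ^ 2

lemma gk_bound_s (z : ℂ) (h0 : z ≠ 0) (hz : ‖z‖ < 2) :
    ‖(Complex.exp z - gkPsi z) - 1 / 2‖ + ‖(3 * gkPsi z - Complex.exp z) - 1 / 2‖
      ≤ 2 * (‖z‖ * (1 - ‖z‖ / 2)⁻¹) := by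
  have hE := gk_hasSum_exp z
  have hP := gk_hasSum_psi z h0
  have hA := hE.sub hP
  have hB := (hP.mul_left 3).sub hE
  have := gk_bound z (fun n => (((n + 1) / (n + 2) : ℝ) : ℂ)) (fun n => (((1 - n) / (n + 2) : ℝ) : ℂ))
    (Complex.exp z - gkPsi z) (3 * gkPsi z - Complex.exp z) 2 ?_ ?_ ?_ hz
  · simpa using this
  · refine gk_congr hA (fun n => ?_) rfl
    have h5 : (n : ℂ) + 2 ≠ 0 := by exact_mod_cast (n + 1).succ_ne_zero
    push_cast
    field_simp
    ring
  · refine gk_congr hB (fun n => ?_) rfl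
    have h5 : (n : ℂ) + 2 ≠ 0 := by exact_mod_cast (n + 1).succ_ne_zero
    push_cast
    field_simp
    ring
  · intro n
    simp only [Complex.norm_real, Real.norm_eq_abs]
    push_cast
    rw [abs_of_nonneg (by positivity), abs_of_nonpos (by
      apply div_nonpos_of_nonpos_of_nonneg <;> [linarith [Nat.cast_nonneg (α := ℝ) n]; positivity])]
    rw [← neg_div, ← add_div, div_le_iff₀ (by positivity)]
    linarith

lemma gk_bound_p (z : ℂ) (h0 : z ≠ 0) (hz : ‖z‖ < 2) :
    ‖gkPsi z - 1 / 2‖ + ‖(Complex.exp z - 3 * gkPsi z) + 1 / 2‖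
      ≤ 1 * (‖z‖ * (1 - ‖z‖ / 2)⁻¹) := by
  have hE := gk_hasSum_exp z
  have hP := gk_hasSum_psi z h0
  have hB := hE.sub (hP.mul_left 3)
  have := gk_bound z (fun n => ((1 / (n + 2) : ℝ) : ℂ)) (fun n => (((n - 1) / (n + 2) : ℝ) : ℂ))
    (gkPsi z) (Complex.exp z - 3 * gkPsi z) 1 ?_ ?_ ?_ hz
  · have e : (Complex.exp z - 3 * gkPsi z) + 1 / 2 = (Complex.exp z - 3 * gkPsi z) - (-1/2) := by ring
    rw [e]
    simpa using this
  · refine gk_congr hP (fun n => ?_) rfl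
    push_cast
    ring
  · refine gk_congr hB (fun n => ?_) rfl
    have h5 : (n : ℂ) + 2 ≠ 0 := by exact_mod_cast (n + 1).succ_ne_zero
    push_cast
    field_simp
    ring
  · intro n
    simp only [Complex.norm_real, Real.norm_eq_abs]
    push_cast
    rw [abs_of_nonneg (by positivity), abs_of_nonneg (by
      apply div_nonneg <;> [linarith [Nat.cast_nonneg (α := ℝ) n]; positivity])]
    rw [← add_div, div_le_iff₀ (by positivity)]
    linarith

lemma gk_opNorm (A : Matrix (Fin 3) (Fin 3) ℂ) (α β : ℂ) (n : E3) (hn : ‖n‖ = 1)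
    (hA : ∀ i j, A i j = α * (if i = j then 1 else 0) + β * ((n i : ℂ) * (n j : ℂ))) :
    opNorm3 A ≤ ‖α‖ + ‖β‖ := by
  unfold opNorm3
  refine ContinuousLinearMap.opNorm_le_bound _ (by positivity) fun v => ?_
  set w : EuclideanSpace ℂ (Fin 3) := WithLp.toLp 2 (fun i => (n i : ℂ)) with hw
  have hwn : ‖w‖ = 1 := by
    rw [← hn, EuclideanSpace.norm_eq, EuclideanSpace.norm_eq]
    simp [hw]
  have e : (LinearMap.toContinuousLinearMap (Matrix.toEuclideanLin A)) v
      = α • v + (β * inner ℂ w v) • w := by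
    ext i
    simp [Matrix.toLpLin_apply, Matrix.mulVec, dotProduct, hA, hw, PiLp.inner_apply, add_mul,
      Finset.sum_add_distrib, Finset.mul_sum, Finset.sum_mul]
    apply Finset.sum_congr rfl
    intros; ring
  rw [e]
  calc _ ≤ ‖α • v‖ + ‖(β * inner ℂ w v) • w‖ := norm_add_le _ _
    _ ≤ ‖α‖ * ‖v‖ + ‖β‖ * ‖v‖ := by
      rw [norm_smul, norm_smul, norm_mul, hwn, mul_one]
      have := norm_inner_le_norm (𝕜 := ℂ) w v
      rw [hwn, one_mul] at this
      gcongr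
    _ = _ := by ring

lemma gk_hasFDerivAt_norm (x y : E3) (h : x ≠ y) :
    HasFDerivAt (fun x' : E3 => ‖x' - y‖) (‖x - y‖⁻¹ • innerSL ℝ (x - y)) x := by
  have h0 : x - y ≠ 0 := sub_ne_zero.2 h
  have h1 : HasFDerivAt (fun x' : E3 => x' - y) (ContinuousLinearMap.id ℝ E3) x :=
    (hasFDerivAt_id x).sub_const y
  have h2 := h1.norm_sq.sqrt (by positivity)
  simp only [Real.sqrt_sq (norm_nonneg _)] at h2
  refine h2.congr_fderiv ?_
  ext v
  have : ‖x - y‖ ≠ 0 := norm_ne_zero_iff.2 h0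
  simp
  field_simp

lemma gk_radial (F : ℝ → ℂ) (F' : ℂ) (x y : E3) (h : x ≠ y) (hF : HasDerivAt F F' ‖x - y‖) :
    HasFDerivAt (fun x' : E3 => F ‖x' - y‖)
      ((ContinuousLinearMap.toSpanSingleton ℝ F').comp (‖x - y‖⁻¹ • innerSL ℝ (x - y))) x :=
  HasFDerivAt.comp x hF.hasFDerivAt (gk_hasFDerivAt_norm x y h)

lemma gk_F (k r : ℝ) (hr : r ≠ 0) :
    HasDerivAt (fun r : ℝ => Complex.exp (Complex.I * k * r) / (4 * Real.pi * r))
      ((Complex.I * k * r - 1) * Complex.exp (Complex.I * k * r) / (4 * Real.pi * r ^ 2)) r := by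
  have hp : (Real.pi : ℂ) ≠ 0 := by exact_mod_cast Real.pi_ne_zero
  have hr' : (r : ℂ) ≠ 0 := by exact_mod_cast hr
  have h1 : HasDerivAt (fun r : ℝ => (r : ℂ)) 1 r := Complex.ofRealCLM.hasDerivAt
  have h2 := ((h1.const_mul (Complex.I * k)).cexp).div (h1.const_mul (4 * (Real.pi : ℂ))) (by simp [hp, hr'])
  refine h2.congr_deriv ?_
  field_simp

lemma gk_G (k r : ℝ) (hr : r ≠ 0) :
    HasDerivAt (fun r : ℝ => (Complex.I * k * r - 1) * Complex.exp (Complex.I * k * r) / (4 * Real.pi * r ^ 3))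
      (((Complex.I * k * r) ^ 2 - 3 * (Complex.I * k * r) + 3) * Complex.exp (Complex.I * k * r) / (4 * Real.pi * r ^ 4)) r := by
  have hp : (Real.pi : ℂ) ≠ 0 := by exact_mod_cast Real.pi_ne_zero
  have hr' : (r : ℂ) ≠ 0 := by exact_mod_cast hr
  have h1 : HasDerivAt (fun r : ℝ => (r : ℂ)) 1 r := Complex.ofRealCLM.hasDerivAt
  have h0 := h1.const_mul (Complex.I * k)
  have h2 := ((h0.sub_const 1).mul h0.cexp).div ((h1.pow 3).const_mul (4 * (Real.pi : ℂ))) (by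
    simp [hp, hr'])
  refine h2.congr_deriv ?_
  simp
  field_simp
  ring

lemma gk_fderiv1 (k : ℝ) (x y : E3) (h : x ≠ y) :
    ∃ L : E3 →L[ℝ] ℂ, HasFDerivAt (fun x' : E3 => Phi k x' y) L x ∧
      ∀ j, L (EuclideanSpace.single j 1) =
        (Complex.I * k * ‖x - y‖ - 1) * Complex.exp (Complex.I * k * ‖x - y‖)
          / (4 * Real.pi * ‖x - y‖ ^ 3) * ((x j - y j : ℝ) : ℂ) := by
  have h0 : ‖x - y‖ ≠ 0 := norm_ne_zero_iff.2 (sub_ne_zero.2 h)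
  refine ⟨_, gk_radial _ _ x y h (gk_F k _ h0), fun j => ?_⟩
  have hr' : (‖x - y‖ : ℂ) ≠ 0 := by exact_mod_cast h0
  have hp : (Real.pi : ℂ) ≠ 0 := by exact_mod_cast Real.pi_ne_zero
  simp [EuclideanSpace.inner_single_right]
  field_simp

lemma gk_fderiv2 (k : ℝ) (x y : E3) (h : x ≠ y) (j : Fin 3) :
    ∃ L : E3 →L[ℝ] ℂ, HasFDerivAt (fun x' : E3 =>
        (Complex.I * k * ‖x' - y‖ - 1) * Complex.exp (Complex.I * k * ‖x' - y‖)
          / (4 * Real.pi * ‖x' - y‖ ^ 3) * ((x' j - y j : ℝ) : ℂ)) L x ∧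
      ∀ i, L (EuclideanSpace.single i 1) =
        1 / (4 * Real.pi * ‖x - y‖ ^ 3) * Complex.exp (Complex.I * k * ‖x - y‖) *
        ((Complex.I * k * ‖x - y‖ - 1) * (if i = j then 1 else 0) +
          ((Complex.I * k * ‖x - y‖) ^ 2 - 3 * (Complex.I * k * ‖x - y‖) + 3) *
           ((((x i - y i) / ‖x - y‖ : ℝ) : ℂ) * (((x j - y j) / ‖x - y‖ : ℝ) : ℂ))) := by
  have h0 : ‖x - y‖ ≠ 0 := norm_ne_zero_iff.2 (sub_ne_zero.2 h)
  have hl : HasFDerivAt (fun x' : E3 => ((x' j - y j : ℝ) : ℂ))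
      (Complex.ofRealCLM.comp (EuclideanSpace.proj j : E3 →L[ℝ] ℝ)) x :=
    Complex.ofRealCLM.hasFDerivAt.comp x
      (((EuclideanSpace.proj j : E3 →L[ℝ] ℝ).hasFDerivAt (x := x)).sub_const (y j))
  refine ⟨_, (gk_radial _ _ x y h (gk_G k _ h0)).mul hl, fun i => ?_⟩
  have hr' : (‖x - y‖ : ℂ) ≠ 0 := by exact_mod_cast h0
  have hp : (Real.pi : ℂ) ≠ 0 := by exact_mod_cast Real.pi_ne_zero
  by_cases hij : i = j
  · subst hij
    simp [EuclideanSpace.inner_single_right]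
    field_simp
    try ring
  · have hji : j ≠ i := fun h => hij h.symm
    simp [EuclideanSpace.inner_single_right, hij, hji]
    try field_simp

lemma gk_hess (k l : ℝ) (x y : E3) (h : x ≠ y) (i j : Fin 3) :
    fderiv ℝ (fun x' : E3 => fderiv ℝ (fun x'' : E3 => Phi k x'' y - Phi l x'' y)
            x' (EuclideanSpace.single j 1)) x (EuclideanSpace.single i 1) =
        1 / (4 * Real.pi * ‖x - y‖ ^ 3) * Complex.exp (Complex.I * k * ‖x - y‖) *
        ((Complex.I * k * ‖x - y‖ - 1) * (if i = j then 1 else 0) +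
          ((Complex.I * k * ‖x - y‖) ^ 2 - 3 * (Complex.I * k * ‖x - y‖) + 3) *
           ((((x i - y i) / ‖x - y‖ : ℝ) : ℂ) * (((x j - y j) / ‖x - y‖ : ℝ) : ℂ)))
        - 1 / (4 * Real.pi * ‖x - y‖ ^ 3) * Complex.exp (Complex.I * l * ‖x - y‖) *
        ((Complex.I * l * ‖x - y‖ - 1) * (if i = j then 1 else 0) +
          ((Complex.I * l * ‖x - y‖) ^ 2 - 3 * (Complex.I * l * ‖x - y‖) + 3) *
           ((((x i - y i) / ‖x - y‖ : ℝ) : ℂ) * (((x j - y j) / ‖x - y‖ : ℝ) : ℂ))) := by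
  obtain ⟨L1, h1, e1⟩ := gk_fderiv2 k x y h j
  obtain ⟨L2, h2, e2⟩ := gk_fderiv2 l x y h j
  rw [← e1 i, ← e2 i, ← sub_apply]
  congr 1
  refine ((h1.sub h2).congr_of_eventuallyEq ?_).fderiv
  filter_upwards [isOpen_ne.mem_nhds h] with x' hx'
  obtain ⟨M1, g1, f1⟩ := gk_fderiv1 k x' y hx'
  obtain ⟨M2, g2, f2⟩ := gk_fderiv1 l x' y hx'
  have := (g1.sub g2).fderiv
  change fderiv ℝ (fun x'' : E3 => Phi k x'' y - Phi l x'' y) x' = _ at this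
  rw [this, sub_apply, f1, f2]
  rfl

lemma gk_alg_a (cs cp om r : ℂ) (es ep d : ℂ) (h1 : cs ≠ 0) (h2 : cp ≠ 0) (h3 : om ≠ 0)
    (h4 : r ≠ 0) (hp : (Real.pi : ℂ) ≠ 0) (q : ℂ) :
    1 / cs ^ 2 * (es / (4 * Real.pi * r)) * d + 1 / om ^ 2 *
      (1 / (4 * Real.pi * r ^ 3) * es * ((Complex.I * (om / cs) * r - 1) * d +
        ((Complex.I * (om / cs) * r) ^ 2 - 3 * (Complex.I * (om / cs) * r) + 3) * q)
      - 1 / (4 * Real.pi * r ^ 3) * ep * ((Complex.I * (om / cp) * r - 1) * d +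
        ((Complex.I * (om / cp) * r) ^ 2 - 3 * (Complex.I * (om / cp) * r) + 3) * q))
      - 1 / (8 * Real.pi) * ((1 / cs ^ 2 + 1 / cp ^ 2) * d / r + (1 / cs ^ 2 - 1 / cp ^ 2) * q / r)
    = 1 / (4 * Real.pi * r) * (1 / cs ^ 2 * (es -
        (es * (Complex.I * (om / cs) * r - 1) + 1) / (Complex.I * (om / cs) * r) ^ 2 - 1 / 2)
        + 1 / cp ^ 2 * ((ep * (Complex.I * (om / cp) * r - 1) + 1) / (Complex.I * (om / cp) * r) ^ 2
          - 1 / 2)) * d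
      + 1 / (4 * Real.pi * r) * (1 / cs ^ 2 * (3 *
        ((es * (Complex.I * (om / cs) * r - 1) + 1) / (Complex.I * (om / cs) * r) ^ 2) - es - 1 / 2)
        + 1 / cp ^ 2 * (ep - 3 * ((ep * (Complex.I * (om / cp) * r - 1) + 1)
          / (Complex.I * (om / cp) * r) ^ 2) + 1 / 2)) * q := by
  have hI : Complex.I ^ 2 = -1 := Complex.I_sq
  simp only [mul_pow, hI]
  field_simp
  ring

theorem gamma_sub_kelvin_bound (lam mu om : ℝ) (hmu : 0 < mu)
    (hlm : 0 < 3 * lam + 2 * mu) (hom : 0 < om)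
    (x y : E3) (hxy : x ≠ y) (hsmall : kappaS mu om * ‖x - y‖ < 2) :
    opNorm3 (GammaMat lam mu om x y - Gamma0Mat lam mu x y)
      ≤ (om / (4 * Real.pi)) *
        ((2 / cS mu ^ 3) * (1 - kappaS mu om * ‖x - y‖ / 2)⁻¹
          + (1 / cP lam mu ^ 3) * (1 - kappaP lam mu om * ‖x - y‖ / 2)⁻¹) := by
  have hr : 0 < ‖x - y‖ := norm_pos_iff.2 (sub_ne_zero.2 hxy)
  have hcs : 0 < cS mu := Real.sqrt_pos.2 hmu
  have hcp : 0 < cP lam mu := Real.sqrt_pos.2 (by linarith)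
  have hle : cS mu ≤ cP lam mu := Real.sqrt_le_sqrt (by linarith)
  have hmu2 : mu = cS mu ^ 2 := (Real.sq_sqrt hmu.le).symm
  have hk : kappaP lam mu om ≤ kappaS mu om := by
    unfold kappaP kappaS; gcongr
  have hsmallp : kappaP lam mu om * ‖x - y‖ < 2 := by nlinarith
  have hks : 0 < kappaS mu om := by unfold kappaS; positivity
  have hkp : 0 < kappaP lam mu om := by unfold kappaP; positivity
  set zs : ℂ := Complex.I * (kappaS mu om : ℂ) * (‖x - y‖ : ℂ) with hzs
  set zp : ℂ := Complex.I * (kappaP lam mu om : ℂ) * (‖x - y‖ : ℂ) with hzp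
  have nzs : ‖zs‖ = kappaS mu om * ‖x - y‖ := by
    rw [hzs, norm_mul, norm_mul, Complex.norm_I, one_mul, Complex.norm_real, Complex.norm_real,
      Real.norm_of_nonneg hks.le, norm_norm]
  have nzp : ‖zp‖ = kappaP lam mu om * ‖x - y‖ := by
    rw [hzp, norm_mul, norm_mul, Complex.norm_I, one_mul, Complex.norm_real, Complex.norm_real,
      Real.norm_of_nonneg hkp.le, norm_norm]
  have bs := gk_bound_s zs (norm_pos_iff.1 (by rw [nzs]; positivity)) (by rw [nzs]; exact hsmall)
  have bp := gk_bound_p zp (norm_pos_iff.1 (by rw [nzp]; positivity)) (by rw [nzp]; exact hsmallp)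
  rw [nzs] at bs
  rw [nzp] at bp
  have main := gk_opNorm (GammaMat lam mu om x y - Gamma0Mat lam mu x y)
    (1 / (4 * Real.pi * ‖x - y‖) * (1 / (cS mu : ℂ) ^ 2 * (Complex.exp zs - gkPsi zs - 1 / 2)
        + 1 / (cP lam mu : ℂ) ^ 2 * (gkPsi zp - 1 / 2)))
    (1 / (4 * Real.pi * ‖x - y‖) * (1 / (cS mu : ℂ) ^ 2 * (3 * gkPsi zs - Complex.exp zs - 1 / 2)
        + 1 / (cP lam mu : ℂ) ^ 2 * (Complex.exp zp - 3 * gkPsi zp + 1 / 2)))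
    (‖x - y‖⁻¹ • (x - y)) (by rw [norm_smul, norm_inv, norm_norm, inv_mul_cancel₀ hr.ne']) ?_
  · refine main.trans ?_
    rw [norm_mul, norm_mul, ← mul_add]
    have e1 : ‖(1 / (4 * Real.pi * ‖x - y‖) : ℂ)‖ = 1 / (4 * Real.pi * ‖x - y‖) := by
      rw [show (1 / (4 * Real.pi * ‖x - y‖) : ℂ) = ((1 / (4 * Real.pi * ‖x - y‖) : ℝ) : ℂ) by
        push_cast; rfl, Complex.norm_real, Real.norm_of_nonneg (by positivity)]
    have e2 : ∀ c : ℝ, ‖(1 / (c : ℂ) ^ 2)‖ = 1 / c ^ 2 := by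
      intro c
      rw [norm_div, norm_pow, Complex.norm_real, norm_one, Real.norm_eq_abs, sq_abs]
    have t1 := norm_add_le (1 / (cS mu : ℂ) ^ 2 * (Complex.exp zs - gkPsi zs - 1 / 2))
      (1 / (cP lam mu : ℂ) ^ 2 * (gkPsi zp - 1 / 2))
    have t2 := norm_add_le (1 / (cS mu : ℂ) ^ 2 * (3 * gkPsi zs - Complex.exp zs - 1 / 2))
      (1 / (cP lam mu : ℂ) ^ 2 * (Complex.exp zp - 3 * gkPsi zp + 1 / 2))
    rw [norm_mul, norm_mul, e2, e2] at t1 t2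
    rw [e1]
    have m1 := mul_le_mul_of_nonneg_left bs (show 0 ≤ 1 / cS mu ^ 2 by positivity)
    have m2 := mul_le_mul_of_nonneg_left bp (show 0 ≤ 1 / cP lam mu ^ 2 by positivity)
    have tot := mul_le_mul_of_nonneg_left (add_le_add t1 t2)
      (show 0 ≤ 1 / (4 * Real.pi * ‖x - y‖) by positivity)
    refine tot.trans ?_
    have tot2 := mul_le_mul_of_nonneg_left (add_le_add m1 m2)
      (show 0 ≤ 1 / (4 * Real.pi * ‖x - y‖) by positivity)
    refine le_trans (le_of_eq (by ring)) (tot2.trans (le_of_eq ?_))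
    generalize (1 - kappaS mu om * ‖x - y‖ / 2)⁻¹ = u
    generalize (1 - kappaP lam mu om * ‖x - y‖ / 2)⁻¹ = w
    unfold kappaS kappaP
    field_simp
  · intro i j
    have hr' : (‖x - y‖ : ℂ) ≠ 0 := by exact_mod_cast hr.ne'
    have hcs' : (cS mu : ℂ) ≠ 0 := by exact_mod_cast hcs.ne'
    have hcp' : (cP lam mu : ℂ) ≠ 0 := by exact_mod_cast hcp.ne'
    have hom' : (om : ℂ) ≠ 0 := by exact_mod_cast hom.ne'
    have hp : (Real.pi : ℂ) ≠ 0 := by exact_mod_cast Real.pi_ne_zero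
    have hq := gk_alg_a (cS mu) (cP lam mu) om ‖x - y‖ (Complex.exp zs) (Complex.exp zp)
      (if i = j then 1 else 0) hcs' hcp' hom' hr' hp
      ((((x i - y i) / ‖x - y‖ : ℝ) : ℂ) * (((x j - y j) / ‖x - y‖ : ℝ) : ℂ))
    have ks : (om : ℂ) / (cS mu : ℂ) = (kappaS mu om : ℂ) := by unfold kappaS; push_cast; rfl
    have kp : (om : ℂ) / (cP lam mu : ℂ) = (kappaP lam mu om : ℂ) := by
      unfold kappaP; push_cast; rfl
    rw [ks, kp, ← hzs, ← hzp] at hq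
    have hn : ∀ i, (((‖x - y‖⁻¹ • (x - y) : E3) i : ℝ) : ℂ) = (((x i - y i) / ‖x - y‖ : ℝ) : ℂ) := by
      intro i
      congr 1
      simp [div_eq_inv_mul]
    rw [hn, hn]
    unfold gkPsi
    rw [← hq]
    simp only [Matrix.sub_apply, GammaMat, Gamma0Mat, Matrix.of_apply, _root_.Gamma]
    rw [gk_hess _ _ x y hxy i j, ← hzs, ← hzp]
    have hm : (mu : ℂ) = (cS mu : ℂ) ^ 2 := by exact_mod_cast hmu2
    rw [hm]
    unfold Phi
    rw [← hzs]
    congr 1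
    by_cases hij : i = j
    · subst hij
      simp
      field_simp
    · simp [hij]
      field_simp

end
end
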